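/- arXiv:2307.10964 — 4 statements merged into one kernel-verified Lean document; each statement's English description precedes it below -/
import Mathlib

section
/- Let E be a CBER on a standard Borel space X and let μ be a Borel probability measure on X. If E is μ-2-amenable, then E is μ-hyperfinite. In particular, if E is Borel 2-amenable, then E is measure-hyperfinite. -/
open MeasureTheory Function Filter

/-! ### Countable Borel equivalence relations -/

section CBER

variable {X Y : Type*} [MeasurableSpace X] [MeasurableSpace Y]

/-- A countable Borel equivalence relation on a standard Borel space. -/
def IsCBER (E : X → X → Prop) : Prop :=
  Equivalence E ∧ MeasurableSet {p : X × X | E p.1 p.2} ∧ ∀ x : X, {y | E x y}.Countable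

/-- `B` meets every `E`-class in exactly one point. -/
def IsTransversal (E : X → X → Prop) (B : Set X) : Prop :=
  ∀ x : X, ∃! y : X, y ∈ B ∧ E x y

/-- A CBER is smooth if it admits a Borel transversal. -/
def SmoothRel (E : X → X → Prop) : Prop :=
  ∃ B : Set X, MeasurableSet B ∧ IsTransversal E B

/-- A Borel equivalence relation all of whose classes are finite. -/
def IsFiniteBorelEquivalence (E : X → X → Prop) : Prop :=
  Equivalence E ∧ MeasurableSet {p : X × X | E p.1 p.2} ∧ ∀ x : X, {y | E x y}.Finite

/-- A CBER is (Borel) hyperfinite if it is the increasing union of a sequence of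
Borel equivalence relations with finite classes. -/
def Hyperfinite (E : X → X → Prop) : Prop :=
  ∃ F : ℕ → X → X → Prop,
    (∀ i, IsFiniteBorelEquivalence (F i)) ∧
    (∀ i x y, F i x y → F (i + 1) x y) ∧
    (∀ x y, E x y ↔ ∃ i, F i x y)

/-- Borel reducibility of equivalence relations. -/
def BorelReducible (E : X → X → Prop) (F : Y → Y → Prop) : Prop :=
  ∃ f : X → Y, Measurable f ∧ ∀ x x' : X, E x x' ↔ F (f x) (f x')

/-- Borel bireducibility of equivalence relations. -/
def BorelBireducible (E : X → X → Prop) (F : Y → Y → Prop) : Prop :=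
  BorelReducible E F ∧ BorelReducible F E

/-- The saturation `[A]_E` of a set `A`: the smallest `E`-invariant set containing `A`. -/
def Saturation (E : X → X → Prop) (A : Set X) : Set X :=
  {x : X | ∃ a ∈ A, E x a}

end CBER

/-! ### ℓ¹ machinery, amenability of CBERs -/

section Amen

variable {X : Type*} [MeasurableSpace X]

/-- ℓ¹ distance between two summable functions. -/
noncomputable def l1dist {A : Type*} (p q : A → ℝ) : ℝ :=
  ∑' a : A, |p a - q a|

/-- `p` is a probability measure concentrated on the `E`-class of `x`
(identified with its density). -/
def IsProbOnClass (E : X → X → Prop) (p : X → ℝ) (x : X) : Prop :=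
  (∀ y, 0 ≤ p y) ∧ (∀ y, p y ≠ 0 → E x y) ∧ HasSum p 1

/-- A CBER is Borel amenable if there is a sequence of Borel assignments of probability
measures on the classes which are asymptotically invariant. -/
def BorelAmenable (E : X → X → Prop) : Prop :=
  ∃ p : ℕ → X → X → ℝ,
    (∀ i x, IsProbOnClass E (p i x) x) ∧
    (∀ i, Measurable fun q : X × X => p i q.1 q.2) ∧
    (∀ x y, E x y → ∀ ε : ℝ, 0 < ε → ∀ᶠ i in atTop, l1dist (p i x) (p i y) < ε)

/-- A CBER is Borel 2-amenable if there is a double sequence of Borel assignments of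
probability measures on the classes which are asymptotically invariant in the
iterated-limit sense. -/
def Borel2Amenable (E : X → X → Prop) : Prop :=
  ∃ p : ℕ → ℕ → X → X → ℝ,
    (∀ i j x, IsProbOnClass E (p i j x) x) ∧
    (∀ i j, Measurable fun q : X × X => p i j q.1 q.2) ∧
    (∀ x y, E x y → ∀ ε : ℝ, 0 < ε →
      ∀ᶠ i in atTop, ∀ᶠ j in atTop, l1dist (p i j x) (p i j y) < ε)

/-- `E` is μ-hyperfinite: hyperfinite off a μ-null set. -/
def MuHyperfinite (E : X → X → Prop) (μ : Measure X) : Prop :=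
  ∃ A : Set X, MeasurableSet A ∧ μ Aᶜ = 0 ∧ Hyperfinite (fun a b : A => E a b)

/-- `E` is μ-amenable: Borel amenable off a μ-null set. -/
def MuAmenable (E : X → X → Prop) (μ : Measure X) : Prop :=
  ∃ A : Set X, MeasurableSet A ∧ μ Aᶜ = 0 ∧ BorelAmenable (fun a b : A => E a b)

/-- `E` is μ-2-amenable: Borel 2-amenable off a μ-null set. -/
def Mu2Amenable (E : X → X → Prop) (μ : Measure X) : Prop :=
  ∃ A : Set X, MeasurableSet A ∧ μ Aᶜ = 0 ∧ Borel2Amenable (fun a b : A => E a b)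

/-- `E` is measure-hyperfinite: μ-hyperfinite for every Borel probability measure μ. -/
def MeasureHyperfinite (E : X → X → Prop) : Prop :=
  ∀ μ : Measure X, IsProbabilityMeasure μ → MuHyperfinite E μ

end Amen

/-! ### Reiter functions and uniform coamenability -/

section Reiter

/-- A (finitely or infinitely supported) probability function on a countable set. -/
def IsProbFun {A : Type*} (p : A → ℝ) : Prop :=
  (∀ a, 0 ≤ p a) ∧ HasSum p 1

/-- The pushforward of `p : Prob(G)` under the orbit map `g ↦ g • x`. -/
noncomputable def pushMeasure {G X : Type*} [Group G] [MulAction G X]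
    (p : G → ℝ) (x : X) : X → ℝ :=
  fun y => ∑' g : {g : G // g • x = y}, p g.1

/-- `p` is an `(S, ε)`-Reiter function for the action `G ↷ X`. -/
def IsReiterFun {G : Type*} (X : Type*) [Group G] [MulAction G X]
    (S : Finset G) (ε : ℝ) (p : G → ℝ) : Prop :=
  IsProbFun p ∧ ∀ s ∈ S, ∀ x : X, l1dist (pushMeasure p x) (pushMeasure p (s • x)) < ε

/-- A subgroup `H ≤ G` is uniformly coamenable if the action `G ↷ G/H` admits
`(S, ε)`-Reiter functions for all finite `S ⊆ G` and all `ε > 0`. -/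
def UniformlyCoamenable {G : Type*} [Group G] (H : Subgroup G) : Prop :=
  ∀ (S : Finset G) (ε : ℝ), 0 < ε → ∃ p : G → ℝ, IsReiterFun (G ⧸ H) S ε p

/-- The Reiter criterion for amenability of a countable group `Q`. -/
def ReiterAmenable (Q : Type*) [Group Q] : Prop :=
  ∀ (S : Finset Q) (ε : ℝ), 0 < ε → ∃ q : Q → ℝ, IsProbFun q ∧
    ∀ s ∈ S, l1dist q (fun x => q (s⁻¹ * x)) < ε

end Reiter

/-! ### Trees, geodesics and the Gromov boundary -/

section Tree

variable {V : Type*} (T : SimpleGraph V)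

/-- The space of infinite geodesics in the graph `T`. -/
def Geo : Set (ℕ → V) :=
  {v | Function.Injective v ∧ ∀ n, T.Adj (v n) (v (n + 1))}

/-- The shift map (the action of the generator of the monoid ℕ) on `Geo T`. -/
def geoShift (v : Geo T) : Geo T :=
  ⟨fun n => v.1 (n + 1),
   fun a b h => by have := v.2.1 h; omega,
   fun n => v.2.2 (n + 1)⟩

/-- Tail equivalence: the orbit equivalence relation of the shift action of the
monoid ℕ on `Geo T`, i.e. the equivalence relation generated by `v ∼ m • v`. -/
def tailRel : Geo T → Geo T → Prop :=
  Relation.EqvGen fun a b => ∃ m : ℕ, b = (geoShift T)^[m] a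

def tailSetoid : Setoid (Geo T) :=
  ⟨tailRel T, Relation.EqvGen.is_equivalence _⟩

/-- The Gromov boundary `∂T = Geo(T)/ℕ`. -/
def Bdry : Type _ := Quotient (tailSetoid T)

instance [MeasurableSpace V] : MeasurableSpace (Bdry T) :=
  inferInstanceAs (MeasurableSpace (Quotient (tailSetoid T)))

variable {G : Type*} [Group G] [MulAction G V]

/-- The action `G ↷ V` is by graph automorphisms of `T`. -/
def IsGraphAction (G : Type*) [Group G] [MulAction G V] : Prop :=
  ∀ (g : G) (v w : V), T.Adj v w ↔ T.Adj (g • v) (g • w)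

variable {T}

/-- The coordinatewise action of `G` on `Geo T`. -/
def geoSmul (h : IsGraphAction T G) (g : G) (v : Geo T) : Geo T :=
  ⟨fun n => g • v.1 n, (MulAction.injective g).comp v.2.1,
   fun n => (h g _ _).mp (v.2.2 n)⟩

lemma geoShift_geoSmul (h : IsGraphAction T G) (g : G) (v : Geo T) :
    geoShift T (geoSmul h g v) = geoSmul h g (geoShift T v) := rfl

lemma iterate_geoShift_geoSmul (h : IsGraphAction T G) (g : G) (m : ℕ) (v : Geo T) :
    (geoShift T)^[m] (geoSmul h g v) = geoSmul h g ((geoShift T)^[m] v) := by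
  induction m generalizing v with
  | zero => rfl
  | succ m ih =>
      rw [Function.iterate_succ_apply, Function.iterate_succ_apply,
        geoShift_geoSmul, ih]

lemma tailRel_geoSmul (h : IsGraphAction T G) (g : G) {v w : Geo T}
    (hvw : tailRel T v w) : tailRel T (geoSmul h g v) (geoSmul h g w) := by
  induction hvw with
  | rel a b hab =>
      obtain ⟨m, rfl⟩ := hab
      exact Relation.EqvGen.rel _ _ ⟨m, (iterate_geoShift_geoSmul h g m a).symm⟩
  | refl a => exact Relation.EqvGen.refl _
  | symm a b _ ih => exact Relation.EqvGen.symm _ _ ih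
  | trans a b c _ _ ih1 ih2 => exact Relation.EqvGen.trans _ _ _ ih1 ih2

/-- The induced action of `G` on the Gromov boundary `∂T`. -/
def bdrySmul (h : IsGraphAction T G) (g : G) : Bdry T → Bdry T :=
  Quotient.map (geoSmul h g) (fun _ _ hab => tailRel_geoSmul h g hab)

/-- The orbit equivalence relation `E_G^{∂T}` of the boundary action. -/
def bdryRel (h : IsGraphAction T G) : Bdry T → Bdry T → Prop :=
  fun x y => ∃ g : G, bdrySmul h g x = y

/-- The orbit equivalence relation `E_G^{Geo(T)}`. -/
def geoRel (h : IsGraphAction T G) : Geo T → Geo T → Prop :=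
  fun v w => ∃ g : G, geoSmul h g v = w

end Tree

/-! ### Stabilizers of geodesics and of their initial segments -/

section Stab

variable (G : Type*) {V : Type*} [Group G] [MulAction G V]

/-- The (pointwise) stabilizer of an infinite sequence of vertices. -/
def ptwiseStab (v : ℕ → V) : Subgroup G where
  carrier := {g : G | ∀ k : ℕ, g • v k = v k}
  one_mem' := fun k => one_smul _ _
  mul_mem' := fun {a b} ha hb k => by rw [mul_smul, hb k, ha k]
  inv_mem' := fun {a} ha k => inv_smul_eq_iff.mpr (ha k).symm

/-- The stabilizer of the initial segment `(v 0, …, v n)`. -/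
def initStab (v : ℕ → V) (n : ℕ) : Subgroup G where
  carrier := {g : G | ∀ k ≤ n, g • v k = v k}
  one_mem' := fun k _ => one_smul _ _
  mul_mem' := fun {a b} ha hb k hk => by rw [mul_smul, hb k hk, ha k hk]
  inv_mem' := fun {a} ha k hk => inv_smul_eq_iff.mpr (ha k hk).symm

/-- The stabilizer of a finite geodesic given as a tuple of vertices. -/
def finStab {n : ℕ} (f : Fin n → V) : Subgroup G where
  carrier := {g : G | ∀ i : Fin n, g • f i = f i}
  one_mem' := fun i => one_smul _ _
  mul_mem' := fun {a b} ha hb i => by rw [mul_smul, hb i, ha i]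
  inv_mem' := fun {a} ha i => inv_smul_eq_iff.mpr (ha i).symm

end Stab

/-! ### Orbit equivalence relations of monoid actions -/

section MonoidOrbit

/-- The orbit equivalence relation of a monoid action: the equivalence relation
generated by `x ∼ m • x`. -/
def monOrbitRel (M : Type*) {X : Type*} [Monoid M] [MulAction M X] :
    X → X → Prop :=
  Relation.EqvGen fun x y => ∃ m : M, y = m • x

end MonoidOrbit

section Aux
open ProbabilityTheory ENNReal

variable {A X : Type*} [MeasurableSpace A] [MeasurableSpace X]

lemma aux_lt_tsum_iff {X : Type*} (f : X → ℝ≥0∞) (c : ℝ≥0∞) :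
    c < ∑' y, f y ↔ ∃ n : ℕ, ∃ v : Fin n → X, Injective v ∧ c < ∑ i, f (v i) := by
  classical
  rw [ENNReal.tsum_eq_iSup_sum, lt_iSup_iff]
  constructor
  · rintro ⟨s, hs⟩
    refine ⟨s.card, fun i => (s.equivFin.symm i : X), ?_, ?_⟩
    · exact Subtype.val_injective.comp s.equivFin.symm.injective
    · rw [Equiv.sum_comp s.equivFin.symm (fun y : s => f y)]
      rwa [Finset.sum_coe_sort s f]
  · rintro ⟨n, v, hv, h⟩
    refine ⟨Finset.univ.image v, ?_⟩
    rwa [Finset.sum_image (fun a _ b _ hab => hv hab)]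

lemma aux_analytic [StandardBorelSpace X] [TopologicalSpace A] [PolishSpace A] [BorelSpace A]
    (q : A → X → ℝ≥0∞) (hq : Measurable (uncurry q)) (c : ℝ≥0∞) :
    AnalyticSet {a | c < ∑' y, q a y} := by
  have : {a | c < ∑' y, q a y} = ⋃ n : ℕ, Prod.fst ''
      {z : A × (Fin n → X) | Injective z.2 ∧ c < ∑ i, q z.1 (z.2 i)} := by
    ext a
    simp only [Set.mem_ofPred_eq, aux_lt_tsum_iff, Set.mem_iUnion, Set.mem_image, Prod.exists,
      exists_and_right, exists_eq_right]
  rw [this]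
  refine AnalyticSet.iUnion fun n => ?_
  refine MeasurableSet.analyticSet_image ?_ measurable_fst
  rw [Set.ofPred_and]
  refine MeasurableSet.inter ?_ ?_
  · have : {z : A × (Fin n → X) | Injective z.2} =
        ⋂ (i : Fin n) (j : Fin n) (_ : i ≠ j), {z | z.2 i = z.2 j}ᶜ := by
      ext z
      simp only [Set.mem_ofPred_eq, Set.mem_iInter, Set.mem_compl_iff]
      constructor
      · intro h i j hij h'
        exact hij (h h')
      · intro h i j h'
        by_contra hij
        exact h i j hij h'
    rw [this]
    refine MeasurableSet.iInter fun i => MeasurableSet.iInter fun j => MeasurableSet.iInter fun _ => ?_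
    exact (measurableSet_eq_fun (by fun_prop) (by fun_prop)).compl
  · refine measurableSet_lt measurable_const ?_
    refine Finset.measurable_sum _ fun i _ => ?_
    exact hq.comp (by fun_prop : Measurable fun z : A × (Fin n → X) => (z.1, z.2 i))

lemma aux_meas_tsum [StandardBorelSpace A] [StandardBorelSpace X]
    (q : A → X → ℝ≥0∞) (hq : Measurable (uncurry q)) (h1 : ∀ a, ∑' y, q a y = 1)
    (C : Set X) (hC : MeasurableSet C) : Measurable fun a => ∑' y, C.indicator (q a) y := by
  let _ := upgradeStandardBorel A
  have hm : ∀ C : Set X, MeasurableSet C → Measurable (uncurry fun a => C.indicator (q a)) := by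
    intro C hC
    have : (uncurry fun a => C.indicator (q a)) = (Prod.snd ⁻¹' C).indicator (uncurry q) := by
      ext ⟨a, y⟩; by_cases h : y ∈ C <;> simp [h]
    rw [this]
    exact hq.indicator (measurable_snd hC)
  have hadd : ∀ a, ∑' y, C.indicator (q a) y + ∑' y, Cᶜ.indicator (q a) y = 1 := by
    intro a
    rw [← ENNReal.tsum_add, ← h1 a]
    congr 1; ext y
    exact congrFun (Set.indicator_self_add_compl C (q a)) y
  refine measurable_of_Ioi fun c => ?_
  refine AnalyticSet.measurableSet_of_compl (aux_analytic _ (hm C hC) c) ?_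
  have heq : ((fun a => ∑' y, C.indicator (q a) y) ⁻¹' Set.Ioi c)ᶜ =
      {a | 1 - c ≤ ∑' y, Cᶜ.indicator (q a) y} := by
    ext a
    simp only [Set.mem_compl_iff, Set.mem_preimage, Set.mem_Ioi, not_lt, Set.mem_ofPred_eq,
      tsub_le_iff_left]
    have hfin : ∑' y, Cᶜ.indicator (q a) y ≠ ∞ := by
      intro h
      have := hadd a
      rw [h] at this
      simp at this
    rw [← hadd a]
    exact (ENNReal.add_le_add_iff_right hfin).symm
  rw [heq]
  by_cases hc : 1 - c = 0
  · simp only [hc, zero_le, Set.ofPred_true]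
    exact MeasurableSet.univ.analyticSet
  obtain ⟨r, -, hr, hr'⟩ := exists_seq_strictMono_tendsto' (pos_iff_ne_zero.2 hc)
  have : {a | 1 - c ≤ ∑' y, Cᶜ.indicator (q a) y} =
      ⋂ n, {a | r n < ∑' y, Cᶜ.indicator (q a) y} := by
    ext a
    simp only [Set.mem_ofPred_eq, Set.mem_iInter]
    exact ⟨fun h n => (hr n).2.trans_le h, fun h => le_of_tendsto' hr' fun n => (h n).le⟩
  rw [this]
  exact AnalyticSet.iInter fun n => aux_analytic _ (hm _ hC.compl) _

/-- the kernel associated with a Borel assignment of discrete probability measures -/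
noncomputable def auxMeas (q : X → ℝ≥0∞) : Measure X :=
  Measure.sum fun y => q y • Measure.dirac y

lemma auxMeas_apply (q : X → ℝ≥0∞) {s : Set X} (hs : MeasurableSet s) :
    auxMeas q s = ∑' y, s.indicator q y := by
  rw [auxMeas, Measure.sum_apply _ hs]
  congr 1; ext y
  by_cases h : y ∈ s <;> simp [hs, h]

lemma auxMeas_lintegral (q : X → ℝ≥0∞) {f : X → ℝ≥0∞} (hf : Measurable f) :
    ∫⁻ y, f y ∂(auxMeas q) = ∑' y, q y * f y := by
  rw [auxMeas, lintegral_sum_measure]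
  congr 1; ext y
  rw [lintegral_smul_measure, lintegral_dirac' _ hf, smul_eq_mul]

lemma auxMeas_singleton [MeasurableSingletonClass X] (q : X → ℝ≥0∞) (y : X) :
    auxMeas q {y} = q y := by
  rw [auxMeas_apply _ (measurableSet_singleton y), tsum_eq_single y]
  · simp
  · intro z hz; simp [hz]

lemma auxMeas_meas [StandardBorelSpace A] [StandardBorelSpace X]
    (q : A → X → ℝ≥0∞) (hq : Measurable (uncurry q)) (h1 : ∀ a, ∑' y, q a y = 1) :
    Measurable fun a => auxMeas (q a) := by
  refine Measure.measurable_of_measurable_coe _ fun s hs => ?_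
  simp only [auxMeas_apply _ hs]
  exact aux_meas_tsum q hq h1 s hs

noncomputable def auxKer [StandardBorelSpace A] [StandardBorelSpace X]
    (q : A → X → ℝ≥0∞) (hq : Measurable (uncurry q)) (h1 : ∀ a, ∑' y, q a y = 1) :
    Kernel A X := ⟨fun a => auxMeas (q a), auxMeas_meas q hq h1⟩

lemma auxKer_apply [StandardBorelSpace A] [StandardBorelSpace X]
    (q : A → X → ℝ≥0∞) (hq : Measurable (uncurry q)) (h1 : ∀ a, ∑' y, q a y = 1) (a : A) :
    auxKer q hq h1 a = auxMeas (q a) := rfl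

instance auxKer_markov [StandardBorelSpace A] [StandardBorelSpace X]
    (q : A → X → ℝ≥0∞) (hq : Measurable (uncurry q)) (h1 : ∀ a, ∑' y, q a y = 1) :
    IsMarkovKernel (auxKer q hq h1) := by
  refine ⟨fun a => ⟨?_⟩⟩
  rw [auxKer_apply, auxMeas_apply _ MeasurableSet.univ]
  simp [h1]

/-- measurability of the fibrewise sums dominated by a kernel -/
lemma aux_meas_tsum_dom [StandardBorelSpace A] [StandardBorelSpace X]
    (q : A → X → ℝ≥0∞) (hq : Measurable (uncurry q)) (h1 : ∀ a, ∑' y, q a y = 1)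
    (f : A → X → ℝ≥0∞) (hf : Measurable (uncurry f)) (h0 : ∀ a y, q a y = 0 → f a y = 0) :
    Measurable fun a => ∑' y, f a y := by
  have : (fun a => ∑' y, f a y) = fun a => ∫⁻ y, f a y / q a y ∂(auxKer q hq h1 a) := by
    ext a
    have hm : Measurable fun y => f a y / q a y :=
      (hf.comp measurable_prodMk_left).div (hq.comp measurable_prodMk_left)
    rw [auxKer_apply, auxMeas_lintegral _ hm]
    congr 1; ext y
    by_cases h : q a y = 0
    · simp [h, h0 a y h]
    · have : q a y ≠ ∞ := by
        intro h'
        have := ENNReal.le_tsum (f := q a) y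
        rw [h1, h'] at this
        simp at this
      rw [ENNReal.mul_div_cancel h this]
  rw [this]
  exact Measurable.lintegral_kernel_prod_right (hf.div hq)

/-- Borel selection for Borel sets with sections having at most one point -/
lemma aux_select [StandardBorelSpace X] (G : Set (X × X)) (hG : MeasurableSet G)
    (hu : ∀ x y z, (x, y) ∈ G → (x, z) ∈ G → y = z) :
    ∃ Y : X → X, Measurable Y ∧ ∀ x, (x, Y x) ∈ G ∨ ((∀ y, (x, y) ∉ G) ∧ Y x = x) := by
  classical
  have hinj : ∀ s ⊆ G, Set.InjOn Prod.fst s := by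
    rintro s hs ⟨x, y⟩ h1 ⟨x', y'⟩ h2 h
    simp only at h
    subst h
    rw [hu x y y' (hs h1) (hs h2)]
  let Y : X → X := fun x => if h : ∃ y, (x, y) ∈ G then h.choose else x
  have hY : ∀ x, (x, Y x) ∈ G ∨ ((∀ y, (x, y) ∉ G) ∧ Y x = x) := by
    intro x
    by_cases h : ∃ y, (x, y) ∈ G
    · left; simp only [Y, dif_pos h]; exact h.choose_spec
    · right; simp only [Y, dif_neg h]; push Not at h; exact ⟨h, trivial⟩
  refine ⟨Y, fun B hB => ?_, hY⟩
  have : Y ⁻¹' B = Prod.fst '' (G ∩ Prod.snd ⁻¹' B) ∪ ((Prod.fst '' G)ᶜ ∩ B) := by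
    ext x
    simp only [Set.mem_preimage, Set.mem_union, Set.mem_image, Set.mem_inter_iff, Prod.exists,
      exists_and_right, exists_eq_right, Set.mem_compl_iff, not_exists]
    rcases hY x with h | ⟨h, h'⟩
    · constructor
      · intro hb; exact Or.inl ⟨_, h, hb⟩
      · rintro (⟨y, hy, hb⟩ | ⟨hn, -⟩)
        · rwa [hu x _ _ h hy]
        · exact absurd h (hn _)
    · rw [h']
      constructor
      · intro hb; exact Or.inr ⟨h, hb⟩
      · rintro (⟨y, hy, hb⟩ | ⟨-, hn⟩)
        · exact absurd hy (h _)
        · exact hn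
  rw [this]
  refine MeasurableSet.union ?_ (MeasurableSet.inter ?_ hB)
  · exact (hG.inter (measurable_snd hB)).image_of_measurable_injOn measurable_fst
      (hinj _ Set.inter_subset_left)
  · exact (hG.image_of_measurable_injOn measurable_fst (hinj _ subset_rfl)).compl

/-- a countable-to-one map is finite-to-one on a large set -/
lemma aux_finite_to_one [StandardBorelSpace X] (s : X → X) (hs : Measurable s)
    (hc : ∀ z, (s ⁻¹' {z}).Countable) (l : Measure X) [IsFiniteMeasure l]
    (ε : ℝ≥0∞) (hε : 0 < ε) :
    ∃ Z : Set X, MeasurableSet Z ∧ l Zᶜ < ε ∧ ∀ z, (s ⁻¹' {z} ∩ Z).Finite := by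
  rcases isEmpty_or_nonempty X with hX | hX
  · exact ⟨Set.univ, MeasurableSet.univ, by simpa using hε, fun z => Set.toFinite _⟩
  let h := condDistrib id s l
  have hh : l.map s ⊗ₘ h = l.map (fun a => (s a, a)) :=
    compProd_map_condDistrib (Y := id) measurable_id.aemeasurable
  have hpm : Measurable fun z : X × X => h z.1 {z.2} := by
    have := Kernel.measurable_kernel_prodMk_left (κ := Kernel.comap h (Prod.fst : X × X → X) measurable_fst)
      (t := {w : (X × X) × X | w.2 = w.1.2}) (measurableSet_eq_fun (by fun_prop) (by fun_prop))
    convert this using 2 with z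
    rw [Kernel.comap_apply]
    congr 1
  let u : X → ℝ≥0∞ := fun x => h (s x) {x}
  have hu : Measurable u := hpm.comp (hs.prodMk measurable_id)
  have hpos : ∀ᵐ x ∂l, u x ≠ 0 := by
    have hmg : MeasurableSet {z : X × X | z.1 = s z.2} :=
      measurableSet_eq_fun (by fun_prop) (by fun_prop)
    have h1 : ∀ᵐ z ∂(l.map s ⊗ₘ h), z.1 = s z.2 := by
      rw [hh, ae_map_iff (by fun_prop) hmg]
      simp
    rw [Measure.ae_compProd_iff hmg] at h1
    have hm2 : MeasurableSet {z : X × X | h z.1 {z.2} ≠ 0} :=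
      (hpm (measurableSet_singleton 0)).compl
    have h2 : ∀ᵐ z ∂(l.map s ⊗ₘ h), h z.1 {z.2} ≠ 0 := by
      rw [Measure.ae_compProd_iff hm2]
      filter_upwards [h1] with z hz
      have hnull : h z {x | z = s x ∧ h z {x} = 0} = 0 := by
        have hcount : {x | z = s x ∧ h z {x} = 0}.Countable :=
          (hc z).mono fun x hx => hx.1.symm
        rw [← Set.biUnion_of_singleton {x | z = s x ∧ h z {x} = 0}]
        rw [measure_biUnion_null_iff hcount]
        exact fun x hx => hx.2
      have : ∀ᵐ x ∂(h z), ¬ (z = s x ∧ h z {x} = 0) := by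
        rw [ae_iff]; simpa using hnull
      filter_upwards [hz, this] with x hx hx' h0
      exact hx' ⟨hx, h0⟩
    rw [hh, ae_map_iff (by fun_prop) hm2] at h2
    exact h2
  let Z : ℕ → Set X := fun n => {x | (n + 1 : ℝ≥0∞)⁻¹ ≤ u x}
  have hZm : ∀ n, MeasurableSet (Z n) := fun n => measurableSet_le measurable_const hu
  have hlim : Tendsto (fun n => l (Z n)ᶜ) atTop (nhds (l (⋂ n, (Z n)ᶜ))) := by
    refine tendsto_measure_iInter_atTop (fun n => (hZm n).compl.nullMeasurableSet) ?_
      ⟨0, measure_ne_top _ _⟩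
    intro n m hnm
    refine Set.compl_subset_compl.2 fun x hx => ?_
    simp only [Z, Set.mem_ofPred_eq] at hx ⊢
    refine le_trans ?_ hx
    simp only [ENNReal.inv_le_inv]
    gcongr
  have hz : l (⋂ n, (Z n)ᶜ) = 0 := by
    refine measure_mono_null ?_ (ae_iff.1 hpos)
    intro x hx
    simp only [Set.mem_iInter, Set.mem_compl_iff, Z, Set.mem_ofPred_eq, not_le] at hx
    simp only [Set.mem_ofPred_eq, not_not]
    by_contra h0
    obtain ⟨n, hn⟩ := ENNReal.exists_inv_nat_lt h0
    have := (hx n).trans_le' hn.le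
    rw [ENNReal.inv_lt_inv] at this
    exact absurd this (by simp)
  rw [hz] at hlim
  obtain ⟨n, hn⟩ := (hlim.eventually (gt_mem_nhds hε)).exists
  refine ⟨Z n, hZm n, hn, fun z => ?_⟩
  have := Measure.finite_const_le_meas_of_disjoint_iUnion (h z) (ε := (n + 1 : ℝ≥0∞)⁻¹)
    (by simp) (As := fun x : X => {x}) (fun x => measurableSet_singleton x)
    (fun x y hxy => by simpa using hxy) (measure_ne_top _ _)
  refine this.subset ?_
  rintro x ⟨hx, hx'⟩
  have hx : s x = z := hx
  simpa [Z, u, hx] using hx'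

end Aux

section Round
open ProbabilityTheory ENNReal

lemma aux_vol1 (a : ℝ) (ha : 0 ≤ a) :
    (volume.restrict (Set.Icc (0:ℝ) 1)) {u | a ≤ u} ≤ ENNReal.ofReal (1 - a) := by
  have hm : MeasurableSet {u : ℝ | a ≤ u} := measurableSet_Ici
  rw [Measure.restrict_apply hm]
  refine (measure_mono (t := Set.Icc a 1) ?_).trans (by simp)
  rintro u ⟨h1, h2⟩
  exact ⟨h1, h2.2⟩

lemma aux_vol2 (a b : ℝ) :
    (volume.restrict (Set.Icc (0:ℝ) 1)) {u | (u < a ∨ u < b) ∧ ¬ (u < a ∧ u < b)} ≤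
      ENNReal.ofReal |a - b| := by
  refine (Measure.restrict_apply_le _ _).trans ?_
  refine (measure_mono (t := Set.Ico (min a b) (max a b)) ?_).trans ?_
  · rintro u ⟨h1, h2⟩
    simp only [Set.mem_Ico, min_le_iff, lt_max_iff]
    refine ⟨?_, h1⟩
    by_contra h
    push Not at h
    exact h2 h
  · rw [Real.volume_Ico, max_sub_min_eq_abs, abs_sub_comm]

lemma aux_vol3 (a b : ℝ) :
    (volume.restrict (Set.Icc (0:ℝ) 1)) {u | u < a ∨ u < b} ≤
      ENNReal.ofReal (max a b) := by
  have hm : MeasurableSet {u : ℝ | u < a ∨ u < b} := by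
    rw [Set.ofPred_or]
    exact measurableSet_Iio.union measurableSet_Iio
  rw [Measure.restrict_apply hm]
  refine (measure_mono (t := Set.Ico 0 (max a b)) ?_).trans (by simp)
  rintro u ⟨h1, h2⟩
  simp only [Set.mem_Ico, lt_max_iff]
  exact ⟨h2.1, h1⟩

/-- the error of one random step in cell `c` -/
noncomputable def auxErr {X K : Type*} (m : K → X → ℝ) (Y : K → X → X) (c : K) (z : X × X) :
    ℝ≥0∞ :=
  open Classical in
  if Y c z.1 = Y c z.2 then ENNReal.ofReal |m c z.1 - m c z.2|
  else ENNReal.ofReal (max (m c z.1) (m c z.2))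

lemma aux_round {X K : Type*} [MeasurableSpace X] [StandardBorelSpace X] [Fintype K] [Nonempty K]
    (E : X → X → Prop) (hrefl : ∀ x, E x x)
    (m : K → X → ℝ) (hm : ∀ c, Measurable (m c)) (hm0 : ∀ c x, 0 ≤ m c x)
    (hm1 : ∀ x, ∑ c, m c x = 1)
    (Y : K → X → X) (hY : ∀ c, Measurable (Y c)) (hYE : ∀ c x, E x (Y c x))
    (η : X × X → ℝ≥0∞) (hη : Measurable η) (hle : ∀ z, ∑ c, auxErr m Y c z ≤ η z)
    (T : ℕ) (ν : Measure (X × X)) [IsFiniteMeasure ν] :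
    ∃ s : X → X, Measurable s ∧ (∀ x, E x (s x)) ∧
      ν {z | s z.1 ≠ s z.2} ≤
        ∫⁻ z, (η z + (((Fintype.card K : ℝ≥0∞) - 1) / Fintype.card K) ^ T) ∂ν := by
  classical
  induction T generalizing ν with
  | zero =>
    refine ⟨id, measurable_id, hrefl, ?_⟩
    calc ν {z | id z.1 ≠ id z.2} ≤ ν Set.univ := measure_mono (Set.subset_univ _)
      _ = ∫⁻ z, 1 ∂ν := by simp
      _ ≤ _ := lintegral_mono fun z => by simp
  | succ T ih =>
    set M : ℝ≥0∞ := ((Fintype.card K : ℕ) : ℝ≥0∞) with hM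
    have hM0 : M ≠ 0 := by simp [hM]
    have hMt : M ≠ ∞ := by simp [hM]
    have hM1 : 1 ≤ M := by
      rw [hM]; exact_mod_cast Fintype.card_pos
    set r : ℝ≥0∞ := (M - 1) / M with hr
    let P : Measure ℝ := volume.restrict (Set.Icc (0:ℝ) 1)
    have : IsProbabilityMeasure P := ⟨by simp [P]⟩
    let φ : X × X → ℝ≥0∞ := fun z => η z + r ^ T
    have hφ : Measurable φ := hη.add_const _
    -- joint sets
    let Dis : K → Set (ℝ × (X × X)) := fun c =>
      {w | (w.1 < m c w.2.1 ∨ w.1 < m c w.2.2) ∧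
        ¬ (w.1 < m c w.2.1 ∧ w.1 < m c w.2.2 ∧ Y c w.2.1 = Y c w.2.2)}
    let Nei : K → Set (ℝ × (X × X)) := fun c =>
      {w | m c w.2.1 ≤ w.1 ∧ m c w.2.2 ≤ w.1}
    have ha : ∀ c, MeasurableSet {w : ℝ × (X × X) | w.1 < m c w.2.1} := fun c =>
      measurableSet_lt measurable_fst ((hm c).comp (by fun_prop))
    have hb : ∀ c, MeasurableSet {w : ℝ × (X × X) | w.1 < m c w.2.2} := fun c =>
      measurableSet_lt measurable_fst ((hm c).comp (by fun_prop))
    have he : ∀ c, MeasurableSet {w : ℝ × (X × X) | Y c w.2.1 = Y c w.2.2} := fun c =>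
      measurableSet_eq_fun ((hY c).comp (by fun_prop)) ((hY c).comp (by fun_prop))
    have hDis : ∀ c, MeasurableSet (Dis c) := fun c =>
      ((ha c).union (hb c)).inter ((ha c).inter ((hb c).inter (he c))).compl
    have hNei : ∀ c, MeasurableSet (Nei c) := fun c =>
      (measurableSet_le ((hm c).comp (by fun_prop)) measurable_fst).inter
      (measurableSet_le ((hm c).comp (by fun_prop)) measurable_fst)
    let g : K → ℝ × (X × X) → ℝ≥0∞ := fun c w =>
      (Dis c).indicator 1 w + (Nei c).indicator (fun w => φ w.2) w
    have hg : ∀ c, Measurable (g c) := fun c =>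
      (measurable_one.indicator (hDis c)).add ((hφ.comp measurable_snd).indicator (hNei c))
    let v : K → ℝ → ℝ≥0∞ := fun c u => ∫⁻ z, g c (u, z) ∂ν
    have hv : ∀ c, Measurable (v c) := fun c => (hg c).lintegral_prod_right'
    -- pointwise estimate
    have hpt : ∀ c z, ∫⁻ u, g c (u, z) ∂P ≤ auxErr m Y c z + φ z * ENNReal.ofReal (1 - m c z.1) := by
      intro c z
      have h1 : ∀ u, g c (u, z) = {u | (u, z) ∈ Dis c}.indicator 1 u +
          φ z * {u | (u, z) ∈ Nei c}.indicator 1 u := by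
        intro u
        by_cases h1 : (u, z) ∈ Dis c <;> by_cases h2 : (u, z) ∈ Nei c <;> simp [g, h1, h2]
      have hd1 : MeasurableSet {u | (u, z) ∈ Dis c} := measurable_prodMk_right (hDis c)
      have hd2 : MeasurableSet {u | (u, z) ∈ Nei c} := measurable_prodMk_right (hNei c)
      simp only [h1]
      rw [lintegral_add_left (measurable_one.indicator hd1),
        lintegral_const_mul _ (measurable_one.indicator hd2),
        lintegral_indicator_one hd1, lintegral_indicator_one hd2]
      gcongr
      · unfold auxErr
        split_ifs with h
        · refine le_trans (measure_mono ?_) (aux_vol2 _ _)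
          intro u hu
          simpa [Dis, h] using hu
        · refine le_trans (measure_mono ?_) (aux_vol3 _ _)
          intro u hu
          exact hu.1
      · refine le_trans (measure_mono ?_) (aux_vol1 _ (hm0 c z.1))
        intro u hu
        exact hu.1
    have hsum1 : ∀ x, ∑ c, ENNReal.ofReal (1 - m c x) = M - 1 := by
      intro x
      have hle1 : ∀ c, m c x ≤ 1 := fun c => by
        rw [← hm1 x]
        exact Finset.single_le_sum (f := fun c => m c x) (fun c _ => hm0 c x) (Finset.mem_univ c)
      rw [← ENNReal.ofReal_sum_of_nonneg (fun c _ => by linarith [hle1 c])]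
      rw [Finset.sum_sub_distrib, hm1, Finset.sum_const, Finset.card_univ, nsmul_eq_mul, mul_one,
        ENNReal.ofReal_sub _ zero_le_one]
      simp [hM]
    have htot : ∫⁻ u, ∑ c, v c u ∂P ≤ M * ∫⁻ z, (η z + r ^ (T + 1)) ∂ν := by
      rw [lintegral_finsetSum _ (fun c _ => hv c)]
      have hsw : ∀ c, ∫⁻ u, v c u ∂P = ∫⁻ z, ∫⁻ u, g c (u, z) ∂P ∂ν := fun c =>
        lintegral_lintegral_swap (f := fun u z => g c (u, z)) (hg c).aemeasurable
      simp only [hsw]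
      rw [← lintegral_finsetSum _ (fun c _ => (hg c).lintegral_prod_left')]
      rw [← lintegral_const_mul _ (hη.add_const _)]
      refine lintegral_mono fun z => ?_
      calc ∑ c, ∫⁻ u, g c (u, z) ∂P
          ≤ ∑ c, (auxErr m Y c z + φ z * ENNReal.ofReal (1 - m c z.1)) :=
            Finset.sum_le_sum fun c _ => hpt c z
        _ ≤ η z + φ z * (M - 1) := by
            rw [Finset.sum_add_distrib, ← Finset.mul_sum, hsum1]
            gcongr
            exact hle z
        _ = (1 + (M - 1)) * η z + (M - 1) * r ^ T := by
            simp only [φ]; ring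
        _ = M * (η z + r ^ (T + 1)) := by
            rw [add_tsub_cancel_of_le hM1, mul_add, pow_succ' r T, ← mul_assoc, hr,
              ENNReal.mul_div_cancel hM0 hMt]
    obtain ⟨u, hu⟩ := exists_le_lintegral (μ := P)
      (Finset.measurable_sum Finset.univ (fun c _ => hv c)).aemeasurable
    obtain ⟨c, -, hc⟩ := Finset.exists_min_image (Finset.univ : Finset K) (fun c => v c u)
      Finset.univ_nonempty
    have hvc : v c u ≤ ∫⁻ z, (η z + r ^ (T + 1)) ∂ν := by
      have h1 : M * v c u ≤ ∑ c, v c u := by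
        have := Finset.card_nsmul_le_sum Finset.univ (fun c => v c u) (v c u) (fun b hb => hc b hb)
        simpa [nsmul_eq_mul, hM] using this
      have h2 := h1.trans (le_trans (by simpa using hu) htot)
      exact (ENNReal.mul_le_mul_iff_right hM0 hMt).1 h2
    -- the recursive step
    let N : Set (X × X) := {z | (u, z) ∈ Nei c}
    have hN : MeasurableSet N := measurable_prodMk_left (hNei c)
    obtain ⟨s, hs, hsE, hsν⟩ := ih (ν.restrict N)
    have hA : MeasurableSet {x | u < m c x} := measurableSet_lt measurable_const (hm c)
    refine ⟨fun x => if u < m c x then Y c x else s x, Measurable.ite hA (hY c) hs, ?_, ?_⟩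
    · intro x
      dsimp only
      split_ifs
      · exact hYE c x
      · exact hsE x
    · have hsm : MeasurableSet {z : X × X | s z.1 ≠ s z.2} :=
        (measurableSet_eq_fun (by fun_prop) (by fun_prop)).compl
      let D : Set (X × X) := {z | (u, z) ∈ Dis c}
      have hD : MeasurableSet D := measurable_prodMk_left (hDis c)
      refine le_trans ?_ hvc
      refine (measure_mono (t := D ∪ ({z : X × X | s z.1 ≠ s z.2} ∩ N)) ?_).trans ?_
      · intro z hz
        simp only [Set.mem_ofPred_eq] at hz
        simp only [Set.mem_union, Set.mem_inter_iff, D, N, Dis, Nei, Set.mem_ofPred_eq]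
        by_cases h1 : u < m c z.1 <;> by_cases h2 : u < m c z.2
        · simp only [h1, h2, if_true] at hz
          left; exact ⟨Or.inl h1, fun h => hz h.2.2⟩
        · left; exact ⟨Or.inl h1, fun h => h2 h.2.1⟩
        · left; exact ⟨Or.inr h2, fun h => h1 h.1⟩
        · simp only [h1, h2, if_false] at hz
          right; exact ⟨hz, not_lt.1 h1, not_lt.1 h2⟩
      · refine (measure_union_le _ _).trans ?_
        rw [Measure.restrict_apply hsm, ← lintegral_indicator hN] at hsν
        refine (add_le_add_right hsν _).trans ?_
        rw [← lintegral_indicator_one hD, ← lintegral_add_left (measurable_one.indicator hD)]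
        refine lintegral_mono fun z => ?_
        apply le_of_eq
        by_cases h1 : (u, z) ∈ Dis c <;> by_cases h2 : (u, z) ∈ Nei c <;> simp [g, h1, h2, D, N, φ]

end Round

section Cell
open ProbabilityTheory ENNReal

/-- pointwise symmetric difference of two `ℝ≥0∞`-valued functions -/
noncomputable def auxDiff {X : Type*} (f f' : X → ℝ≥0∞) (y : X) : ℝ≥0∞ :=
  (f y - f' y) + (f' y - f y)

lemma auxDiff_comm {X : Type*} (f f' : X → ℝ≥0∞) : auxDiff f f' = auxDiff f' f := by
  ext y; simp [auxDiff, add_comm]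

lemma aux_le_add_diff {X : Type*} (f f' : X → ℝ≥0∞) (y : X) : f y ≤ f' y + auxDiff f f' y := by
  unfold auxDiff
  calc f y ≤ f' y + (f y - f' y) := le_add_tsub
    _ ≤ _ := by gcongr; exact le_self_add

lemma aux_sum_le {X : Type*} (f f' : X → ℝ≥0∞) (S : Set X) :
    ∑' y, S.indicator f y ≤ ∑' y, S.indicator f' y + ∑' y, S.indicator (auxDiff f f') y := by
  rw [← ENNReal.tsum_add]
  refine ENNReal.tsum_le_tsum fun y => ?_
  by_cases h : y ∈ S
  · simpa [h] using aux_le_add_diff f f' y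
  · simp [h]

lemma aux_two_le {X : Type*} (f : X → ℝ≥0∞) (S : Set X) {y z : X} (hy : y ∈ S) (hz : z ∈ S)
    (hyz : y ≠ z) : f y + f z ≤ ∑' y, S.indicator f y := by
  classical
  have := ENNReal.sum_le_tsum (f := S.indicator f) {y, z}
  rwa [Finset.sum_pair hyz, Set.indicator_of_mem hy, Set.indicator_of_mem hz] at this

lemma aux_ind_le {X : Type*} (f : X → ℝ≥0∞) (S : Set X) :
    ∑' y, S.indicator f y ≤ ∑' y, f y :=
  ENNReal.tsum_le_tsum fun y => Set.indicator_le_self _ _ _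

lemma aux_unique {X : Type*} (f : X → ℝ≥0∞) (hf : ∑' y, f y = 1) (S : Set X) {y z : X}
    (hy : y ∈ S) (hz : z ∈ S)
    (h1 : 3 / 4 * ∑' y, S.indicator f y < f y) (h2 : 3 / 4 * ∑' y, S.indicator f y < f z) :
    y = z := by
  by_contra hyz
  have h := aux_two_le f S hy hz hyz
  have hm := aux_ind_le f S
  rw [hf] at hm
  have hmt := ne_top_of_le_ne_top one_ne_top hm
  have h3 := ENNReal.add_lt_add h1 h2
  have h4 := h3.trans_le h
  rw [← add_mul] at h4
  have h5 : (1 : ℝ≥0∞) ≤ 3 / 4 + 3 / 4 := by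
    rw [← ENNReal.toReal_le_toReal (by simp) (by finiteness)]
    rw [ENNReal.toReal_add (by finiteness) (by finiteness)]
    norm_num
  have h6 : 1 * ∑' y, S.indicator f y < ∑' y, S.indicator f y :=
    (mul_le_mul_left h5 _).trans_lt h4
  simp at h6

lemma aux_absdiff (m m' l : ℝ≥0∞) (hm : m ≠ ∞) (hm' : m' ≠ ∞) (h1 : m ≤ m' + l) (h2 : m' ≤ m + l) :
    ENNReal.ofReal |m.toReal - m'.toReal| ≤ l := by
  by_cases hl : l = ∞
  · simp [hl]
  refine ENNReal.ofReal_le_of_le_toReal ?_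
  have h1' := ENNReal.toReal_mono (by finiteness) h1
  have h2' := ENNReal.toReal_mono (by finiteness) h2
  rw [ENNReal.toReal_add hm' hl] at h1'
  rw [ENNReal.toReal_add hm hl] at h2'
  rw [abs_le]; constructor <;> linarith

lemma aux_max (m m' t : ℝ≥0∞) (hm : m ≠ ∞) (hm' : m' ≠ ∞) (h1 : m ≤ t) (h2 : m' ≤ t) :
    ENNReal.ofReal (max m.toReal m'.toReal) ≤ t := by
  rcases max_choice m.toReal m'.toReal with h | h <;> rw [h]
  · rwa [ENNReal.ofReal_toReal hm]
  · rwa [ENNReal.ofReal_toReal hm']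

lemma aux_good {X : Type*} (f f' : X → ℝ≥0∞) (S : Set X) {y y' : X} (hf : ∑' y, f y = 1)
    (hf' : ∑' y, f' y = 1) (hy : y ∈ S) (hy' : y' ∈ S) (hyy : y ≠ y')
    (h1 : 3 / 4 * ∑' y, S.indicator f y < f y) (h2 : 3 / 4 * ∑' y, S.indicator f' y < f' y') :
    ∑' y, S.indicator f y + ∑' y, S.indicator f' y ≤ 2 * ∑' y, S.indicator (auxDiff f f') y := by
  have hl : auxDiff f f' y + auxDiff f f' y' ≤ ∑' y, S.indicator (auxDiff f f') y :=
    aux_two_le _ S hy hy' hyy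
  have hm := aux_ind_le f S
  have hm' := aux_ind_le f' S
  rw [hf] at hm
  rw [hf'] at hm'
  have ha := aux_two_le f S hy hy' hyy
  have ha' := aux_two_le f' S hy hy' hyy
  have hd : f y ≤ f' y + auxDiff f f' y := aux_le_add_diff f f' y
  have hd' : f' y' ≤ f y' + auxDiff f f' y' := by
    rw [auxDiff_comm]; exact aux_le_add_diff f' f y'
  generalize (∑' y, S.indicator f y) = m at *
  generalize (∑' y, S.indicator f' y) = m' at *
  generalize (∑' y, S.indicator (auxDiff f f') y) = l at *
  generalize auxDiff f f' y = d at *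
  generalize auxDiff f f' y' = d' at *
  by_cases hlt : l = ∞
  · simp [hlt]
  have hmt : m ≠ ∞ := ne_top_of_le_ne_top one_ne_top hm
  have hmt' : m' ≠ ∞ := ne_top_of_le_ne_top one_ne_top hm'
  generalize f y = a at *
  generalize f y' = b at *
  generalize f' y = a' at *
  generalize f' y' = b' at *
  have hat : a ≠ ∞ := ne_top_of_le_ne_top hmt (le_self_add.trans ha)
  have hbt : b ≠ ∞ := ne_top_of_le_ne_top hmt ((self_le_add_left b a).trans ha)
  have hat' : a' ≠ ∞ := ne_top_of_le_ne_top hmt' (le_self_add.trans ha')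
  have hbt' : b' ≠ ∞ := ne_top_of_le_ne_top hmt' ((self_le_add_left b' a').trans ha')
  have hdt : d ≠ ∞ := ne_top_of_le_ne_top hlt (le_self_add.trans hl)
  have hdt' : d' ≠ ∞ := ne_top_of_le_ne_top hlt ((self_le_add_left d' d).trans hl)
  lift m to NNReal using hmt
  lift m' to NNReal using hmt'
  lift l to NNReal using hlt
  lift d to NNReal using hdt
  lift d' to NNReal using hdt'
  lift a to NNReal using hat
  lift b to NNReal using hbt
  lift a' to NNReal using hat'
  lift b' to NNReal using hbt'
  have e : (3 / 4 : ℝ≥0∞) = ((3 / 4 : NNReal) : ℝ≥0∞) := by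
    rw [ENNReal.coe_div (by norm_num)]; norm_num
  rw [e] at h1 h2
  norm_cast at *
  rw [← NNReal.coe_lt_coe] at h1 h2
  rw [← NNReal.coe_le_coe] at *
  push_cast at *
  linarith

/-- the part of `f` in `S` not carried by a dominating atom -/
noncomputable def auxBad {X : Type*} (f : X → ℝ≥0∞) (S : Set X) : ℝ≥0∞ :=
  ∑' y, S.indicator ({y | f y ≤ 3 / 4 * ∑' y, S.indicator f y}.indicator f) y

lemma auxBad_eq {X : Type*} (f : X → ℝ≥0∞) (S : Set X)
    (h : ∀ y ∈ S, f y ≤ 3 / 4 * ∑' y, S.indicator f y) : auxBad f S = ∑' y, S.indicator f y := by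
  unfold auxBad
  congr 1; ext y
  by_cases hy : y ∈ S
  · rw [Set.indicator_of_mem hy, Set.indicator_of_mem hy, Set.indicator_of_mem]
    exact h y hy
  · simp [hy]

lemma aux_cell {X : Type*} (f f' : X → ℝ≥0∞) (S : Set X) {y y' : X} (hf : ∑' y, f y = 1)
    (hf' : ∑' y, f' y = 1)
    (hy : (y ∈ S ∧ 3 / 4 * ∑' y, S.indicator f y < f y) ∨
      ∀ y ∈ S, f y ≤ 3 / 4 * ∑' y, S.indicator f y)
    (hy' : (y' ∈ S ∧ 3 / 4 * ∑' y, S.indicator f' y < f' y') ∨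
      ∀ y ∈ S, f' y ≤ 3 / 4 * ∑' y, S.indicator f' y) (hyy : y ≠ y') :
    ENNReal.ofReal (max (∑' y, S.indicator f y).toReal (∑' y, S.indicator f' y).toReal) ≤
      2 * ∑' y, S.indicator (auxDiff f f') y + auxBad f S + auxBad f' S := by
  have hm := aux_ind_le f S
  have hm' := aux_ind_le f' S
  rw [hf] at hm
  rw [hf'] at hm'
  have hmt := ne_top_of_le_ne_top one_ne_top hm
  have hmt' := ne_top_of_le_ne_top one_ne_top hm'
  have hs := aux_sum_le f f' S
  have hs' := aux_sum_le f' f S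
  rw [auxDiff_comm f' f] at hs'
  apply aux_max _ _ _ hmt hmt'
  · rcases hy' with hy' | hy'
    · rcases hy with hy | hy
      · have := aux_good f f' S hf hf' hy.1 hy'.1 hyy hy.2 hy'.2
        exact (le_self_add.trans this).trans (by rw [add_assoc]; exact le_self_add)
      · rw [auxBad_eq f S hy]
        exact (self_le_add_left _ _).trans le_self_add
    · rw [auxBad_eq f' S hy', two_mul]
      refine hs.trans ?_
      rw [add_comm]
      gcongr
      rw [add_assoc]
      exact le_self_add
  · rcases hy with hy | hy
    · rcases hy' with hy' | hy'
      · have := aux_good f f' S hf hf' hy.1 hy'.1 hyy hy.2 hy'.2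
        exact ((self_le_add_left _ _).trans this).trans (by rw [add_assoc]; exact le_self_add)
      · rw [auxBad_eq f' S hy']
        exact self_le_add_left _ _
    · rw [auxBad_eq f S hy, two_mul]
      refine hs'.trans ?_
      rw [add_comm]
      refine le_trans ?_ le_self_add
      gcongr
      exact le_self_add

lemma aux_sum_cells {X K : Type*} [Fintype K] (cd : X → K) (f : X → ℝ≥0∞) :
    ∑ c, ∑' y, {y | cd y = c}.indicator f y = ∑' y, f y := by
  classical
  rw [← Summable.tsum_finsetSum (fun _ _ => ENNReal.summable)]
  congr 1; ext y
  rw [Finset.sum_eq_single (cd y)]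
  · simp
  · intro c _ hc
    simp [hc.symm]
  · simp

end Cell

section Key
open ProbabilityTheory ENNReal

variable {X : Type*} [MeasurableSpace X] [StandardBorelSpace X]

lemma aux_diff_meas (q : X → X → ℝ≥0∞) (hq : Measurable (uncurry q)) (h1 : ∀ a, ∑' y, q a y = 1) :
    Measurable fun z : X × X => ∑' y, auxDiff (q z.1) (q z.2) y := by
  have hqa : Measurable fun w : (X × X) × X => q w.1.1 w.2 :=
    hq.comp (by fun_prop : Measurable fun w : (X × X) × X => (w.1.1, w.2))
  have hqb : Measurable fun w : (X × X) × X => q w.1.2 w.2 :=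
    hq.comp (by fun_prop : Measurable fun w : (X × X) × X => (w.1.2, w.2))
  refine aux_meas_tsum_dom (fun (z : X × X) y => 2⁻¹ * (q z.1 y + q z.2 y)) ?_ ?_
    (fun z y => auxDiff (q z.1) (q z.2) y) ?_ ?_
  · exact (hqa.add hqb).const_mul _
  · intro z
    rw [ENNReal.tsum_mul_left, ENNReal.tsum_add, h1, h1, one_add_one_eq_two]
    exact ENNReal.inv_mul_cancel (by simp) (by simp)
  · exact (hqa.sub hqb).add (hqb.sub hqa)
  · intro z y h
    have : q z.1 y = 0 ∧ q z.2 y = 0 := by simpa using h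
    simp [auxDiff, this.1, this.2]

lemma aux_key (E : X → X → Prop) (hrefl : ∀ x, E x x)
    (q : X → X → ℝ≥0∞) (hq : Measurable (uncurry q)) (h1 : ∀ a, ∑' y, q a y = 1)
    (hs : ∀ x y, q x y ≠ 0 → E x y)
    (ν : Measure (X × X)) [IsFiniteMeasure ν] (ε : ℝ≥0∞) (hε : 0 < ε) :
    ∃ s : X → X, Measurable s ∧ (∀ x, E x (s x)) ∧
      ν {z | s z.1 ≠ s z.2} ≤ 2 * ∫⁻ z, ∑' y, auxDiff (q z.1) (q z.2) y ∂ν + ε := by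
  classical
  obtain ⟨code, hcode, hinj⟩ :=
    MeasurableSpace.measurable_injection_nat_bool_of_countablySeparated X
  let cd : (k : ℕ) → X → (Fin k → Bool) := fun k y i => code y i
  have hcd : ∀ k, Measurable (cd k) := fun k => by fun_prop
  let cell : (k : ℕ) → (Fin k → Bool) → Set X := fun k c => {y | cd k y = c}
  have hcell : ∀ k c, MeasurableSet (cell k c) := fun k c => hcd k (measurableSet_singleton c)
  let M : (k : ℕ) → (Fin k → Bool) → X → ℝ≥0∞ := fun k c x => ∑' y, (cell k c).indicator (q x) y
  have hM : ∀ k c, Measurable (M k c) := fun k c => aux_meas_tsum q hq h1 _ (hcell k c)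
  have hM1 : ∀ k c x, M k c x ≠ ∞ := fun k c x => by
    have := aux_ind_le (q x) (cell k c)
    rw [h1] at this
    exact ne_top_of_le_ne_top one_ne_top this
  have hMj : ∀ k, Measurable fun z : X × X => M k (cd k z.2) z.1 := fun k => by
    have : Measurable fun w : X × (Fin k → Bool) => M k w.2 w.1 :=
      measurable_from_prod_countable_left fun c => hM k c
    exact this.comp (measurable_fst.prodMk ((hcd k).comp measurable_snd))
  let Bad : ℕ → Set (X × X) := fun k => {z | q z.1 z.2 ≤ 3 / 4 * M k (cd k z.2) z.1}
  have hBad : ∀ k, MeasurableSet (Bad k) := fun k =>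
    measurableSet_le hq ((hMj k).const_mul _)
  let κ := auxKer q hq h1
  let B : ℕ → X → ℝ≥0∞ := fun k x => κ x (Prod.mk x ⁻¹' Bad k)
  have hB : ∀ k, Measurable (B k) := fun k => Kernel.measurable_kernel_prodMk_left (hBad k)
  -- the bad part tends to zero
  have hlim : ∀ l : Measure X, IsFiniteMeasure l →
      Tendsto (fun k => ∫⁻ x, B k x ∂l) atTop (nhds 0) := by
    intro l hl
    have e : ∀ k, ∫⁻ x, B k x ∂l = (l ⊗ₘ κ) (Bad k) := fun k =>
      (Measure.compProd_apply (hBad k)).symm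
    simp only [e]
    have hanti : Antitone Bad := by
      intro k k' hkk z hz
      simp only [Bad, Set.mem_ofPred_eq] at hz ⊢
      refine hz.trans ?_
      gcongr
      refine ENNReal.tsum_le_tsum fun y => ?_
      refine Set.indicator_le_indicator_of_subset ?_ (fun _ => zero_le) y
      intro y hy
      have hy : cd k' y = cd k' z.2 := hy
      show cd k y = cd k z.2
      ext i
      exact congrFun hy (Fin.castLE hkk i)
    have ht := tendsto_measure_iInter_atTop (μ := l ⊗ₘ κ)
      (fun k => (hBad k).nullMeasurableSet) hanti ⟨0, measure_ne_top _ _⟩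
    have h0 : (l ⊗ₘ κ) (⋂ k, Bad k) = 0 := by
      rw [Measure.compProd_apply (MeasurableSet.iInter hBad)]
      rw [lintegral_eq_zero_iff (Kernel.measurable_kernel_prodMk_left (MeasurableSet.iInter hBad))]
      refine Eventually.of_forall fun x => ?_
      simp only [Pi.zero_apply]
      have hms : MeasurableSet (Prod.mk x ⁻¹' ⋂ k, Bad k) :=
        measurable_prodMk_left (MeasurableSet.iInter hBad)
      rw [auxKer_apply, auxMeas_apply _ hms]
      rw [ENNReal.tsum_eq_zero]
      intro y
      by_cases hy : y ∈ Prod.mk x ⁻¹' ⋂ k, Bad k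
      · rw [Set.indicator_of_mem hy]
        simp only [Set.mem_preimage, Set.mem_iInter, Bad, Set.mem_ofPred_eq] at hy
        have hML : Tendsto (fun k => M k (cd k y) x) atTop (nhds (q x y)) := by
          have e2 : ∀ k, M k (cd k y) x = auxMeas (q x) (cell k (cd k y)) := fun k =>
            (auxMeas_apply _ (hcell k _)).symm
          have e3 : q x y = auxMeas (q x) (⋂ k, cell k (cd k y)) := by
            rw [← auxMeas_singleton (q x) y]
            congr 1
            ext y'
            simp only [Set.mem_singleton_iff, Set.mem_iInter]
            constructor
            · rintro rfl k; exact rfl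
            · intro h
              apply hinj
              ext n
              have h' : cd (n + 1) y' = cd (n + 1) y := h (n + 1)
              exact congrFun h' ⟨n, Nat.lt_succ_self n⟩
          simp only [e2]
          rw [e3]
          have : IsProbabilityMeasure (auxMeas (q x)) := by
            have := (auxKer_markov q hq h1).isProbabilityMeasure x
            exact this
          refine tendsto_measure_iInter_atTop (fun k => (hcell k _).nullMeasurableSet) ?_
            ⟨0, measure_ne_top _ _⟩
          intro k k' hkk y' hy'
          have hy' : cd k' y' = cd k' y := hy'
          show cd k y' = cd k y
          ext i
          exact congrFun hy' (Fin.castLE hkk i)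
        have hle : q x y ≤ 3 / 4 * q x y := by
          refine ge_of_tendsto' (ENNReal.Tendsto.const_mul hML (Or.inr (by finiteness))) hy
        by_contra hne
        have hqt : q x y ≠ ∞ := by
          have := ENNReal.le_tsum (f := q x) y
          rw [h1] at this
          exact ne_top_of_le_ne_top one_ne_top this
        have h34 : (3 / 4 : ℝ≥0∞) < 1 := by
          rw [ENNReal.div_lt_iff (by simp) (by simp)]
          norm_num
        have : 3 / 4 * q x y < 1 * q x y := by
          exact (ENNReal.mul_lt_mul_iff_left hne hqt).2 h34
        rw [one_mul] at this
        exact absurd hle (not_le.2 this)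
      · rw [Set.indicator_of_notMem hy]
    rwa [h0] at ht
  -- choice of `k`
  have hε2 : 0 < ε / 2 := ENNReal.half_pos hε.ne'
  obtain ⟨k, hk⟩ : ∃ k, ∫⁻ x, B k x ∂(ν.fst + ν.snd) < ε / 2 :=
    ((hlim (ν.fst + ν.snd) inferInstance).eventually (gt_mem_nhds hε2)).exists
  -- the selectors
  have hsel : ∀ c : Fin k → Bool, ∃ Y : X → X, Measurable Y ∧
      ∀ x, (Y x ∈ cell k c ∧ 3 / 4 * M k c x < q x (Y x)) ∨
        ((∀ y ∈ cell k c, q x y ≤ 3 / 4 * M k c x) ∧ Y x = x) := by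
    intro c
    obtain ⟨Y, hY, hY'⟩ := aux_select
      ({z : X × X | z.2 ∈ cell k c} ∩ {z : X × X | 3 / 4 * M k c z.1 < q z.1 z.2})
      ((measurable_snd (hcell k c)).inter
        (measurableSet_lt (((hM k c).comp measurable_fst).const_mul _) hq))
      (by
        rintro x y z ⟨hy1, hy2⟩ ⟨hz1, hz2⟩
        exact aux_unique (q x) (h1 x) (cell k c) hy1 hz1 hy2 hz2)
    refine ⟨Y, hY, fun x => ?_⟩
    rcases hY' x with h | ⟨h, h'⟩
    · left; exact h
    · right
      refine ⟨fun y hy => ?_, h'⟩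
      by_contra hlt
      exact h y ⟨hy, not_le.1 hlt⟩
  choose Y hY hY' using hsel
  let D : X × X → ℝ≥0∞ := fun z => ∑' y, auxDiff (q z.1) (q z.2) y
  have hD : Measurable D := aux_diff_meas q hq h1
  let η : X × X → ℝ≥0∞ := fun z => 2 * D z + B k z.1 + B k z.2
  have hη : Measurable η :=
    ((hD.const_mul _).add ((hB k).comp measurable_fst)).add ((hB k).comp measurable_snd)
  have hBsum : ∀ x, ∑ c, auxBad (q x) (cell k c) = B k x := by
    intro x
    have hms : MeasurableSet (Prod.mk x ⁻¹' Bad k) := measurable_prodMk_left (hBad k)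
    simp only [B, κ]
    rw [auxKer_apply, auxMeas_apply _ hms, ← aux_sum_cells (cd k)]
    refine Finset.sum_congr rfl fun c _ => ?_
    unfold auxBad
    congr 1; ext y
    by_cases hy : cd k y = c
    · rw [Set.indicator_of_mem (show y ∈ cell k c from hy),
        Set.indicator_of_mem (show y ∈ {y | cd k y = c} from hy)]
      subst hy
      rfl
    · rw [Set.indicator_of_notMem (show y ∉ cell k c from hy),
        Set.indicator_of_notMem (show y ∉ {y | cd k y = c} from hy)]
  have hDsum : ∀ z : X × X, ∑ c, ∑' y, (cell k c).indicator (auxDiff (q z.1) (q z.2)) y = D z :=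
    fun z => aux_sum_cells (cd k) _
  have hle : ∀ z, ∑ c, auxErr (fun c x => (M k c x).toReal) Y c z ≤ η z := by
    intro z
    simp only [η]
    rw [← hBsum z.1, ← hBsum z.2, ← hDsum z, Finset.mul_sum, ← Finset.sum_add_distrib,
      ← Finset.sum_add_distrib]
    refine Finset.sum_le_sum fun c _ => ?_
    unfold auxErr
    split_ifs with h
    · refine le_trans (aux_absdiff _ _ (∑' y, (cell k c).indicator (auxDiff (q z.1) (q z.2)) y)
        (hM1 _ _ _) (hM1 _ _ _) (aux_sum_le _ _ _) ?_) ?_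
      · rw [auxDiff_comm]; exact aux_sum_le _ _ _
      · rw [two_mul, add_assoc, add_assoc]; exact le_self_add
    · exact aux_cell (q z.1) (q z.2) (cell k c) (h1 _) (h1 _) ((hY' c z.1).imp id And.left)
        ((hY' c z.2).imp id And.left) h
  -- choice of `T`
  have hr : (((Fintype.card (Fin k → Bool) : ℕ) : ℝ≥0∞) - 1) / (Fintype.card (Fin k → Bool) : ℕ) < 1 := by
    have h0 : ((Fintype.card (Fin k → Bool) : ℕ) : ℝ≥0∞) ≠ 0 := by simp
    have ht : ((Fintype.card (Fin k → Bool) : ℕ) : ℝ≥0∞) ≠ ∞ := by simp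
    rw [ENNReal.div_lt_iff (Or.inl h0) (Or.inl ht), one_mul]
    exact ENNReal.sub_lt_self ht h0 one_ne_zero
  have hT : Tendsto (fun T : ℕ => ((((Fintype.card (Fin k → Bool) : ℕ) : ℝ≥0∞) - 1) /
      (Fintype.card (Fin k → Bool) : ℕ)) ^ T * ν Set.univ) atTop (nhds 0) := by
    have := ENNReal.Tendsto.mul_const (ENNReal.tendsto_pow_atTop_nhds_zero_of_lt_one hr)
      (b := ν Set.univ) (Or.inr (measure_ne_top _ _))
    simpa using this
  obtain ⟨T, hT⟩ := (hT.eventually (gt_mem_nhds hε2)).exists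
  obtain ⟨s, hsm, hsE, hsν⟩ := aux_round E hrefl (fun c x => (M k c x).toReal)
    (fun c => (hM k c).ennreal_toReal) (fun c x => ENNReal.toReal_nonneg)
    (by
      intro x
      rw [← ENNReal.toReal_sum (fun c _ => hM1 k c x)]
      rw [aux_sum_cells (cd k) (q x), h1]
      simp)
    Y hY
    (by
      intro c x
      rcases hY' c x with h | h
      · exact hs _ _ (pos_of_gt h.2).ne'
      · rw [h.2]; exact hrefl x)
    η hη hle T ν
  refine ⟨s, hsm, hsE, hsν.trans ?_⟩
  rw [lintegral_add_left hη, lintegral_const]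
  have hηi : ∫⁻ z, η z ∂ν = 2 * ∫⁻ z, D z ∂ν + ∫⁻ x, B k x ∂(ν.fst + ν.snd) := by
    have hB1 : Measurable fun z : X × X => B k z.1 := (hB k).comp measurable_fst
    have hB2 : Measurable fun z : X × X => B k z.2 := (hB k).comp measurable_snd
    simp only [η]
    rw [lintegral_add_right _ hB2, lintegral_add_right _ hB1, lintegral_const_mul _ hD,
      lintegral_add_measure, Measure.fst, Measure.snd, lintegral_map (hB k) measurable_fst,
      lintegral_map (hB k) measurable_snd, add_assoc]
  rw [hηi, add_assoc]
  gcongr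
  calc _ ≤ ε / 2 + ε / 2 := add_le_add hk.le hT.le
    _ = ε := ENNReal.add_halves ε

end Key

section Main
open ProbabilityTheory ENNReal

variable {X : Type*} [MeasurableSpace X] [StandardBorelSpace X]

lemma aux_exists_ij (D : ℕ → ℕ → X × X → ℝ≥0∞) (hD : ∀ i j, Measurable (D i j))
    (hD2 : ∀ i j z, D i j z ≤ 2) (ν : Measure (X × X)) [IsFiniteMeasure ν]
    (h : ∀ᵐ z ∂ν, ∀ ε : ℝ≥0∞, 0 < ε → ∀ᶠ i in atTop, ∀ᶠ j in atTop, D i j z ≤ ε)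
    (ε : ℝ≥0∞) (hε : 0 < ε) : ∃ i j, ∫⁻ z, D i j z ∂ν < ε := by
  have hfin : ∫⁻ _, (2 : ℝ≥0∞) ∂ν ≠ ∞ := by
    rw [lintegral_const]; finiteness
  let L : ℕ → X × X → ℝ≥0∞ := fun i z => limsup (fun j => D i j z) atTop
  have hL : ∀ i, Measurable (L i) := fun i => Measurable.limsup (hD i)
  have hL2 : ∀ i z, L i z ≤ 2 := fun i z =>
    limsup_le_of_le (h := Eventually.of_forall fun j => hD2 i j z)
  have hL0 : ∀ᵐ z ∂ν, Tendsto (fun i => L i z) atTop (nhds 0) := by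
    filter_upwards [h] with z hz
    rw [ENNReal.tendsto_nhds_zero]
    intro δ hδ
    filter_upwards [hz δ hδ] with i hi
    exact limsup_le_of_le (h := hi)
  have ht := tendsto_lintegral_of_dominated_convergence (μ := ν) (fun _ => (2 : ℝ≥0∞)) hL
    (fun i => Eventually.of_forall (hL2 i)) hfin hL0
  rw [lintegral_zero] at ht
  obtain ⟨i, hi⟩ := (ht.eventually (gt_mem_nhds hε)).exists
  have hls := limsup_lintegral_le (μ := ν) (f := D i) (fun _ => (2 : ℝ≥0∞)) (hD i)
    (fun j => Eventually.of_forall (hD2 i j)) hfin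
  have := eventually_lt_of_limsup_lt (hls.trans_lt hi)
  obtain ⟨j, hj⟩ := this.exists
  exact ⟨i, j, hj⟩

lemma aux_ofReal_diff (a b : ℝ) (ha : 0 ≤ a) (hb : 0 ≤ b) :
    (ENNReal.ofReal a - ENNReal.ofReal b) + (ENNReal.ofReal b - ENNReal.ofReal a) =
      ENNReal.ofReal |a - b| := by
  rw [← ENNReal.ofReal_sub _ hb, ← ENNReal.ofReal_sub _ ha]
  rcases le_total a b with h | h
  · rw [ENNReal.ofReal_of_nonpos (by linarith), abs_of_nonpos (by linarith)]
    simp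
  · rw [ENNReal.ofReal_of_nonpos (p := b - a) (by linarith), abs_of_nonneg (by linarith)]
    simp

theorem aux_main (E : X → X → Prop) (hE : Equivalence E) (hc : ∀ x, {y | E x y}.Countable)
    (h2 : Borel2Amenable E) (μ : Measure X) [IsFiniteMeasure μ] :
    ∃ Y : Set X, MeasurableSet Y ∧ μ Yᶜ = 0 ∧ ∃ F : ℕ → X → X → Prop,
      (∀ i, IsFiniteBorelEquivalence (F i)) ∧ (∀ i x y, F i x y → F (i + 1) x y) ∧
      (∀ i x y, F i x y → E x y) ∧ ∀ x ∈ Y, ∀ y ∈ Y, E x y → ∃ i, F i x y := by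
  classical
  obtain ⟨p, hp, hpm, hpa⟩ := h2
  let q : ℕ → ℕ → X → X → ℝ≥0∞ := fun i j x y => ENNReal.ofReal (p i j x y)
  have hq : ∀ i j, Measurable (uncurry (q i j)) := fun i j => (hpm i j).ennreal_ofReal
  have hq1 : ∀ i j x, ∑' y, q i j x y = 1 := by
    intro i j x
    have h := hp i j x
    rw [← ENNReal.ofReal_tsum_of_nonneg h.1 h.2.2.summable, h.2.2.tsum_eq]
    simp
  have hqE : ∀ i j x y, q i j x y ≠ 0 → E x y := by
    intro i j x y h
    refine (hp i j x).2.1 y fun h0 => h ?_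
    simp [q, h0]
  let D : ℕ → ℕ → X × X → ℝ≥0∞ := fun i j z => ∑' y, auxDiff (q i j z.1) (q i j z.2) y
  have hDm : ∀ i j, Measurable (D i j) := fun i j => aux_diff_meas _ (hq i j) (hq1 i j)
  have hD2 : ∀ i j z, D i j z ≤ 2 := by
    intro i j z
    calc D i j z ≤ ∑' y, (q i j z.1 y + q i j z.2 y) :=
          ENNReal.tsum_le_tsum fun y => add_le_add tsub_le_self tsub_le_self
      _ = 2 := by rw [ENNReal.tsum_add, hq1, hq1, one_add_one_eq_two]
  have hDl : ∀ i j x y, D i j (x, y) = ENNReal.ofReal (l1dist (p i j x) (p i j y)) := by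
    intro i j x y
    unfold l1dist
    rw [ENNReal.ofReal_tsum_of_nonneg (fun _ => abs_nonneg _)
      ((hp i j x).2.2.summable.sub (hp i j y).2.2.summable).abs]
    refine tsum_congr fun a => ?_
    exact aux_ofReal_diff _ _ ((hp i j x).1 a) ((hp i j y).1 a)
  -- the total kernel
  let w : X → X → ℝ≥0∞ := fun x y => ∑' n : ℕ, 2⁻¹ ^ (n + 1) * q n.unpair.1 n.unpair.2 x y
  have hw : Measurable (uncurry w) :=
    Measurable.ennreal_tsum fun n => (hq n.unpair.1 n.unpair.2).const_mul _
  have hw1 : ∀ x, ∑' y, w x y = 1 := by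
    intro x
    rw [ENNReal.tsum_comm]
    simp only [ENNReal.tsum_mul_left, hq1, mul_one]
    rw [ENNReal.tsum_geometric_add_one]
    simp
    exact ENNReal.inv_mul_cancel (by simp) (by simp)
  have hw0 : ∀ x y, w x y ≠ 0 ↔ ∃ i j, q i j x y ≠ 0 := by
    intro x y
    simp only [w, ne_eq, ENNReal.tsum_eq_zero, not_forall]
    constructor
    · rintro ⟨n, hn⟩
      exact ⟨_, _, fun h => hn (by rw [h, mul_zero])⟩
    · rintro ⟨i, j, h⟩
      refine ⟨Nat.pair i j, ?_⟩
      simp only [Nat.unpair_pair]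
      exact mul_ne_zero (by simp) h
  let κ := auxKer w hw hw1
  let ν := μ ⊗ₘ κ
  have hκ : ∀ x y, κ x {y} = w x y := fun x y => auxMeas_singleton _ _
  have hνE : ∀ᵐ z ∂ν, E z.1 z.2 := by
    have hm : MeasurableSet {z : X × X | w z.1 z.2 ≠ 0} := (hw (measurableSet_singleton 0)).compl
    have : ∀ᵐ z ∂ν, w z.1 z.2 ≠ 0 := by
      rw [Measure.ae_compProd_iff hm]
      refine Eventually.of_forall fun x => ?_
      have hm' : MeasurableSet {y | w x y ≠ 0}ᶜ := (measurable_prodMk_left (x := x) hm).compl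
      change κ x {y | w x y ≠ 0}ᶜ = 0
      rw [auxKer_apply, auxMeas_apply _ hm', ENNReal.tsum_eq_zero]
      intro y
      by_cases h : w x y = 0
      · simp [Set.indicator_apply, h]
      · rw [Set.indicator_of_notMem]; simpa using h
    filter_upwards [this] with z hz
    obtain ⟨i, j, h⟩ := (hw0 _ _).1 hz
    exact hqE i j _ _ h
  have hconv : ∀ᵐ z ∂ν, ∀ ε : ℝ≥0∞, 0 < ε → ∀ᶠ i in atTop, ∀ᶠ j in atTop, D i j z ≤ ε := by
    filter_upwards [hνE] with z hz ε hε
    by_cases hεt : ε = ∞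
    · simp [hεt]
    have := hpa z.1 z.2 hz ε.toReal (ENNReal.toReal_pos hε.ne' hεt)
    filter_upwards [this] with i hi
    filter_upwards [hi] with j hj
    rw [show z = (z.1, z.2) from rfl, hDl]
    exact (ENNReal.ofReal_le_ofReal hj.le).trans (ENNReal.ofReal_toReal hεt).le
  -- finite approximations
  have happ : ∀ ε : ℝ≥0∞, 0 < ε → ∃ F : X → X → Prop, IsFiniteBorelEquivalence F ∧
      (∀ x y, F x y → E x y) ∧ ν {z | ¬ F z.1 z.2} ≤ ε := by
    intro ε hε
    have hε4 : 0 < ε / 4 := ENNReal.div_pos hε.ne' (by simp)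
    obtain ⟨i, j, hij⟩ := aux_exists_ij D hDm hD2 ν hconv (ε / 4) hε4
    obtain ⟨s, hsm, hsE, hsν⟩ := aux_key E hE.refl (q i j) (hq i j) (hq1 i j) (hqE i j) ν (ε / 4) hε4
    have hss : ∀ x y, s x = s y → E x y := fun x y h =>
      hE.trans (hsE x) (h ▸ hE.symm (hsE y))
    obtain ⟨Z, hZ, hZl, hZf⟩ := aux_finite_to_one s hsm
      (by
        intro z
        rcases (s ⁻¹' {z}).eq_empty_or_nonempty with h | ⟨x, hx⟩
        · simp [h]
        · refine (hc x).mono fun y hy => hss x y ?_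
          have hx : s x = z := hx
          have hy : s y = z := hy
          rw [hx, hy])
      (ν.fst + ν.snd) (ε / 4) hε4
    refine ⟨fun x y => x = y ∨ (x ∈ Z ∧ y ∈ Z ∧ s x = s y), ⟨⟨?_, ?_, ?_⟩, ?_, ?_⟩, ?_, ?_⟩
    · exact fun x => Or.inl rfl
    · rintro x y (h | ⟨h1, h2, h3⟩)
      · exact Or.inl h.symm
      · exact Or.inr ⟨h2, h1, h3.symm⟩
    · rintro x y z (rfl | ⟨h1, h2, h3⟩) (rfl | ⟨h4, h5, h6⟩)
      · exact Or.inl rfl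
      · exact Or.inr ⟨h4, h5, h6⟩
      · exact Or.inr ⟨h1, h2, h3⟩
      · exact Or.inr ⟨h1, h5, h3.trans h6⟩
    · exact (measurableSet_eq_fun measurable_fst measurable_snd).union
        ((measurable_fst hZ).inter ((measurable_snd hZ).inter
          (measurableSet_eq_fun (hsm.comp measurable_fst) (hsm.comp measurable_snd))))
    · intro x
      refine ((Set.finite_singleton x).union (hZf (s x))).subset ?_
      rintro y (h | ⟨h1, h2, h3⟩)
      · exact Or.inl h.symm
      · exact Or.inr ⟨h3.symm, h2⟩
    · rintro x y (rfl | ⟨-, -, h⟩)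
      · exact hE.refl x
      · exact hss x y h
    · have hsub : {z : X × X | ¬ (z.1 = z.2 ∨ (z.1 ∈ Z ∧ z.2 ∈ Z ∧ s z.1 = s z.2))} ⊆
          {z | s z.1 ≠ s z.2} ∪ (Prod.fst ⁻¹' Zᶜ ∪ Prod.snd ⁻¹' Zᶜ) := by
        intro z hz
        simp only [Set.mem_ofPred_eq, Set.mem_union, Set.mem_preimage, Set.mem_compl_iff] at hz ⊢
        tauto
      have hl : ν (Prod.fst ⁻¹' Zᶜ) + ν (Prod.snd ⁻¹' Zᶜ) = (ν.fst + ν.snd) Zᶜ := by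
        rw [Measure.add_apply, Measure.fst_apply hZ.compl, Measure.snd_apply hZ.compl]
      calc _ ≤ ν {z | s z.1 ≠ s z.2} + (ν (Prod.fst ⁻¹' Zᶜ) + ν (Prod.snd ⁻¹' Zᶜ)) :=
            (measure_mono hsub).trans ((measure_union_le _ _).trans
              (add_le_add_right (measure_union_le _ _) _))
        _ ≤ (2 * (ε / 4) + ε / 4) + ε / 4 := by
            rw [hl]
            refine add_le_add (hsν.trans ?_) hZl.le
            gcongr
        _ = 4 * (ε / 4) := by ring
        _ = ε := ENNReal.mul_div_cancel (by simp) (by simp)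
  choose F hF hFE hFν using fun n : ℕ => happ (2⁻¹ ^ n) (ENNReal.pow_pos (by simp) n)
  have hBC : ∀ᵐ z ∂ν, ∀ᶠ n in atTop, z ∉ {z : X × X | ¬ F n z.1 z.2} := by
    refine ae_eventually_notMem (ne_top_of_le_ne_top ?_ (ENNReal.tsum_le_tsum hFν))
    rw [ENNReal.tsum_geometric]
    simp
  let R : Set (X × X) := ⋃ m : ℕ, ⋂ (n : ℕ) (_ : m ≤ n), {z | F n z.1 z.2}
  have hR : MeasurableSet R := MeasurableSet.iUnion fun m => MeasurableSet.iInter fun n =>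
    MeasurableSet.iInter fun _ => (hF n).2.1
  have hνR : ∀ᵐ z ∂ν, z ∈ R := by
    filter_upwards [hBC] with z hz
    obtain ⟨m, hm⟩ := eventually_atTop.1 hz
    simp only [R, Set.mem_iUnion, Set.mem_iInter]
    exact ⟨m, fun n hn => not_not.1 (hm n hn)⟩
  have hRm : ∀ x y, (x, y) ∈ R ↔ ∃ m, ∀ n, m ≤ n → F n x y := by
    intro x y
    simp only [R, Set.mem_iUnion, Set.mem_iInter, Set.mem_ofPred_eq]
  rw [Measure.ae_compProd_iff (p := fun z => z ∈ R) hR] at hνR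
  have hgood : ∀ᵐ x ∂μ, ∀ y, w x y ≠ 0 → (x, y) ∈ R := by
    filter_upwards [hνR] with x hx y hy
    by_contra hn
    refine hy ?_
    rw [← hκ]
    refine measure_mono_null ?_ (ae_iff.1 hx)
    rintro _ rfl
    exact hn
  refine ⟨(toMeasurable μ {x | ¬ ∀ y, w x y ≠ 0 → (x, y) ∈ R})ᶜ,
    (measurableSet_toMeasurable _ _).compl, ?_, fun m x y => ∀ n, m ≤ n → F n x y, ?_, ?_, ?_, ?_⟩
  · rw [compl_compl, measure_toMeasurable]
    exact ae_iff.1 hgood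
  · intro m
    refine ⟨⟨fun x n _ => (hF n).1.refl x, fun h n hn => (hF n).1.symm (h n hn),
      fun h h' n hn => (hF n).1.trans (h n hn) (h' n hn)⟩, ?_, ?_⟩
    · have : {z : X × X | ∀ n, m ≤ n → F n z.1 z.2} = ⋂ (n : ℕ) (_ : m ≤ n), {z | F n z.1 z.2} := by
        ext z; simp
      rw [this]
      exact MeasurableSet.iInter fun n => MeasurableSet.iInter fun _ => (hF n).2.1
    · intro x
      exact ((hF m).2.2 x).subset fun y hy => hy m le_rfl
  · intro m x y h n hn
    exact h n (by omega)
  · intro m x y h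
    exact hFE m x y (h m le_rfl)
  · intro x hx y hy hxy
    have hG : ∀ x ∈ (toMeasurable μ {x | ¬ ∀ y, w x y ≠ 0 → (x, y) ∈ R})ᶜ,
        ∀ y, w x y ≠ 0 → (x, y) ∈ R := by
      intro x hx
      by_contra h
      exact hx (subset_toMeasurable _ _ h)
    obtain ⟨i, hi⟩ := (hpa x y hxy 1 one_pos).exists
    obtain ⟨j, hj⟩ := hi.exists
    obtain ⟨z, hz1, hz2⟩ : ∃ z, q i j x z ≠ 0 ∧ q i j y z ≠ 0 := by
      by_contra hno
      push Not at hno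
      have hDe : D i j (x, y) = 2 := by
        have : ∀ z, auxDiff (q i j x) (q i j y) z = q i j x z + q i j y z := by
          intro z
          unfold auxDiff
          by_cases h : q i j x z = 0
          · simp [h]
          · simp [hno z h]
        simp only [D, this]
        rw [ENNReal.tsum_add, hq1, hq1, one_add_one_eq_two]
      rw [hDl] at hDe
      have : ENNReal.ofReal (l1dist (p i j x) (p i j y)) ≤ 1 := by
        rw [← ENNReal.ofReal_one]
        exact ENNReal.ofReal_le_ofReal hj.le
      rw [hDe] at this
      norm_num at this
    obtain ⟨m1, h1⟩ := (hRm _ _).1 (hG x hx z ((hw0 _ _).2 ⟨i, j, hz1⟩))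
    obtain ⟨m2, h2⟩ := (hRm _ _).1 (hG y hy z ((hw0 _ _).2 ⟨i, j, hz2⟩))
    refine ⟨max m1 m2, fun n hn => ?_⟩
    exact (hF n).1.trans (h1 n (le_trans (le_max_left _ _) hn))
      ((hF n).1.symm (h2 n (le_trans (le_max_right _ _) hn)))

lemma aux_muhyp (E : X → X → Prop) (hE : IsCBER E) (μ : Measure X) [IsFiniteMeasure μ]
    (h : Mu2Amenable E μ) : MuHyperfinite E μ := by
  obtain ⟨A, hA, hμA, h2⟩ := h
  have : StandardBorelSpace A := hA.standardBorel
  obtain ⟨Y, hY, hμY, F, hF, hFi, hFE, hFY⟩ := aux_main (fun a b : A => E a b)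
    ⟨fun a => hE.1.refl _, fun h => hE.1.symm h, fun h h' => hE.1.trans h h'⟩
    (fun a => (hE.2.2 a).preimage Subtype.val_injective) h2 (μ.comap Subtype.val)
  have hYm : MeasurableSet (Subtype.val '' Y : Set X) := hA.subtype_image hY
  refine ⟨Subtype.val '' Y, hYm, ?_, ?_⟩
  · have hsub : (Subtype.val '' Y : Set X)ᶜ ⊆ Aᶜ ∪ Subtype.val '' Yᶜ := by
      intro x hx
      by_cases hxA : x ∈ A
      · right
        exact ⟨⟨x, hxA⟩, fun h => hx ⟨_, h, rfl⟩, rfl⟩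
      · left; exact hxA
    refine measure_mono_null hsub (measure_union_null hμA ?_)
    rw [← comap_subtype_coe_apply hA]
    exact hμY
  · have hin : ∀ a : (Subtype.val '' Y : Set X), (a : X) ∈ A := by
      rintro ⟨_, ⟨y, _, rfl⟩⟩
      exact y.2
    let f : (Subtype.val '' Y : Set X) → A := fun a => ⟨a, hin a⟩
    have hf : Measurable f := measurable_subtype_coe.subtype_mk
    have hfi : Injective f := by
      intro a b h
      have h2 : (f a : X) = (f b : X) := by rw [h]
      exact Subtype.ext h2
    have hfY : ∀ a, f a ∈ Y := by
      rintro ⟨_, ⟨y, hy, rfl⟩⟩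
      exact hy
    refine ⟨fun i a b => F i (f a) (f b), fun i => ⟨⟨fun a => (hF i).1.refl _,
      fun h => (hF i).1.symm h, fun h h' => (hF i).1.trans h h'⟩, ?_, ?_⟩, ?_, ?_⟩
    · exact ((hf.comp measurable_fst).prodMk (hf.comp measurable_snd)) (hF i).2.1
    · intro a
      exact ((hF i).2.2 (f a)).preimage hfi.injOn
    · exact fun i a b h => hFi i _ _ h
    · intro a b
      exact ⟨fun h => hFY _ (hfY a) _ (hfY b) h, fun ⟨i, h⟩ => hFE i _ _ h⟩

end Main

/-! ### STATEMENT 5 -/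

theorem measure_hyperfinite_of_two_amenable {X : Type*} [MeasurableSpace X]
    [StandardBorelSpace X] (E : X → X → Prop) (hE : IsCBER E)
    (μ : Measure X) [IsProbabilityMeasure μ] :
    (Mu2Amenable E μ → MuHyperfinite E μ) ∧
    (Borel2Amenable E → MeasureHyperfinite E) := by
  have huniv : ∀ μ : Measure X, Borel2Amenable E → Mu2Amenable E μ := by
    intro μ h
    obtain ⟨p, hp, hpm, hpa⟩ := h
    refine ⟨Set.univ, MeasurableSet.univ, by simp, fun i j a b => p i j a b, ?_, ?_, ?_⟩
    · intro i j x
      refine ⟨fun y => (hp i j x).1 y, fun y => (hp i j x).2.1 y, ?_⟩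
      exact (Equiv.Set.univ X).hasSum_iff.2 (hp i j x).2.2
    · intro i j
      exact (hpm i j).comp ((measurable_subtype_coe.comp measurable_fst).prodMk
        (measurable_subtype_coe.comp measurable_snd))
    · intro x y h ε hε
      filter_upwards [hpa x y h ε hε] with i hi
      filter_upwards [hi] with j hj
      refine lt_of_eq_of_lt ?_ hj
      exact (Equiv.Set.univ X).tsum_eq (fun a => |p i j x a - p i j y a|)
  exact ⟨fun h => aux_muhyp E hE μ h, fun h ν _ => aux_muhyp E hE ν (huniv ν h)⟩
end

section
/- Let G be a countable group, let G ↷ X be a Borel action generating a CBER E = E_G^X on a standard Borel space X, let μ be a Borel probability measure on X, and let (p_{i,j})_{i,j∈ℕ} be Borel assignments of probability measures p_{i,j}^x on [x]_E such that for μ-almost every x, for every g ∈ G and every ε > 0, for all but finitely many i and all but finitely many j one has ‖p_{i,j}^x − p_{i,j}^{gx}‖₁ < ε. Then there exists a function f : ℕ → ℕ such that for μ-almost every x, for every g ∈ G and every ε > 0, for all but finitely many i, for all j ≥ f(i), ‖p_{i,j}^x − p_{i,j}^{gx}‖₁ < ε. Consequently (p_{i,f(i)})_{i∈ℕ} witnesses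 μ-amenability of E. -/
open MeasureTheory Function Filter

/-! ### STATEMENT 6 -/

lemma aux_measurable_tsum {X : Type*} [MeasurableSpace X] [StandardBorelSpace X]
    {G : Type*} [Group G] [Countable G] [MulAction G X]
    (hBorel : ∀ g : G, Measurable fun x : X => g • x)
    (F : X → X → ℝ) (hF : Measurable fun q : X × X => F q.1 q.2)
    (hsupp : ∀ x y, F x y ≠ 0 → ∃ g : G, g • x = y)
    (hsum : ∀ x, Summable (F x)) :
    Measurable fun x => ∑' y, F x y := by
  classical
  obtain ⟨s, hs⟩ := exists_surjective_nat G
  let T : X → Set ℕ := fun x => {n | ∀ m < n, s m • x ≠ s n • x}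
  have hinj : ∀ x, Function.Injective (fun n : T x => s n • x) := by
    intro x a b hab
    rcases lt_trichotomy a.1 b.1 with h | h | h
    · exact absurd hab (b.2 _ h)
    · exact Subtype.ext h
    · exact absurd hab.symm (a.2 _ h)
  have hrange : ∀ x, Function.support (F x) ⊆ Set.range (fun n : T x => s n • x) := by
    intro x y hy
    obtain ⟨g, hg⟩ := hsupp x y hy
    have hex : ∃ n, s n • x = y := by
      obtain ⟨n, rfl⟩ := hs g
      exact ⟨n, hg⟩
    refine ⟨⟨Nat.find hex, ?_⟩, Nat.find_spec hex⟩
    intro m hm h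
    exact Nat.find_min hex hm (h.trans (Nat.find_spec hex))
  have key : ∀ x, ∑' y, F x y = ∑' n, (T x).indicator (fun n => F x (s n • x)) n := by
    intro x
    rw [← (hinj x).tsum_eq (hrange x), ← tsum_subtype]
  have hsum2 : ∀ x, Summable ((T x).indicator (fun n => F x (s n • x))) := by
    intro x
    rw [← summable_subtype_iff_indicator]
    exact (hsum x).comp_injective (hinj x)
  simp_rw [key]
  refine measurable_of_tendsto_metrizable
    (f := fun N x => ∑ n ∈ Finset.range N, (T x).indicator (fun n => F x (s n • x)) n) ?_ ?_
  · intro N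
    refine Finset.measurable_sum _ fun n _ => ?_
    have hT : MeasurableSet {x | n ∈ T x} := by
      have : {x | n ∈ T x} = ⋂ m, ⋂ (_ : m < n), {x | s m • x = s n • x}ᶜ := by
        ext x; simp [T]
      rw [this]
      exact MeasurableSet.iInter fun m => MeasurableSet.iInter fun _ =>
        (measurableSet_eq_fun (hBorel _) (hBorel _)).compl
    have : (fun x => (T x).indicator (fun n => F x (s n • x)) n)
        = {x | n ∈ T x}.indicator (fun x => F x (s n • x)) := by
      ext x
      simp only [Set.indicator, Set.mem_ofPred_eq]
    rw [this]
    exact (hF.comp (measurable_id.prodMk (hBorel (s n)))).indicator hT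
  · rw [tendsto_pi_nhds]
    intro x
    exact (hsum2 x).hasSum.tendsto_sum_nat

/-- The diagonalization, for an abstract double sequence of functions. -/
lemma aux_diag {X : Type*} [MeasurableSpace X] (μ : Measure X) [IsProbabilityMeasure μ]
    {G : Type*} [Countable G] [Nonempty G] (d : G → ℕ → ℕ → X → ℝ)
    (hd : ∀ g i j, Measurable (d g i j))
    (hae : ∀ᵐ x ∂μ, ∀ g : G, ∀ ε : ℝ, 0 < ε →
      ∀ᶠ i in atTop, ∀ᶠ j in atTop, d g i j x < ε) :
    ∃ f : ℕ → ℕ, ∀ᵐ x ∂μ, ∀ g : G, ∀ ε : ℝ, 0 < ε →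
        ∀ᶠ i in atTop, ∀ j ≥ f i, d g i j x < ε := by
  obtain ⟨s, hs⟩ := exists_surjective_nat (G × ℕ)
  let e : ℕ → ℝ := fun m => 1 / ((s m).2 + 1 : ℝ)
  have he : ∀ m, 0 < e m := fun m => Nat.one_div_pos_of_nat
  let Good : ℕ → ℕ → ℕ → Set X := fun i m n => {x | ∀ j ≥ n, d (s m).1 i j x < e m}
  have hGm : ∀ i m n, MeasurableSet (Good i m n) := by
    intro i m n
    have : Good i m n = ⋂ j, ⋂ (_ : j ≥ n), {x | d (s m).1 i j x < e m} := by
      ext x; simp [Good]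
    rw [this]
    exact MeasurableSet.iInter fun j => MeasurableSet.iInter fun _ =>
      measurableSet_lt (hd _ _ _) measurable_const
  have hGmono : ∀ i m, Monotone (Good i m) := by
    intro i m a b hab x hx j hj
    exact hx j (hab.trans hj)
  let C : ℕ → ℕ → Set X := fun i m => ⋃ n, Good i m n
  have hCm : ∀ i m, MeasurableSet (C i m) := fun i m => MeasurableSet.iUnion (hGm i m)
  have hN : ∀ i m, ∃ n, μ (C i m \ Good i m n) < (1 / 2 : ENNReal) ^ i := by
    intro i m
    have ht := tendsto_measure_iInter_atTop (μ := μ) (s := fun n => C i m \ Good i m n)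
      (fun n => ((hCm i m).diff (hGm i m n)).nullMeasurableSet)
      (fun a b hab => Set.sdiff_subset_sdiff_right (hGmono i m hab))
      ⟨0, measure_ne_top _ _⟩
    have h0 : ⋂ n, C i m \ Good i m n = ∅ := by
      rw [← Set.sdiff_iUnion]
      exact Set.sdiff_self
    rw [h0, measure_empty] at ht
    exact (ht.eventually_lt_const (ENNReal.pow_pos (by simp) i)).exists
  choose N hN using hN
  refine ⟨fun i => (Finset.range (i + 1)).sup (N i), ?_⟩
  set f : ℕ → ℕ := fun i => (Finset.range (i + 1)).sup (N i) with hf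
  have hBC : ∀ m, ∀ᵐ x ∂μ, ∀ᶠ i in atTop, x ∉ C i m \ Good i m (f i) := by
    intro m
    have h1 : ∀ᵐ x ∂μ, ∀ᶠ i in atTop, x ∉ C (i + m) m \ Good (i + m) m (f (i + m)) := by
      apply ae_eventually_notMem
      have hle : ∀ i, μ (C (i + m) m \ Good (i + m) m (f (i + m))) ≤ (1 / 2 : ENNReal) ^ i := by
        intro i
        calc _ ≤ μ (C (i + m) m \ Good (i + m) m (N (i + m) m)) := by
              apply measure_mono
              apply Set.sdiff_subset_sdiff_right
              apply hGmono
              exact Finset.le_sup (f := N (i + m)) (Finset.mem_range.2 (by omega))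
          _ ≤ (1 / 2 : ENNReal) ^ (i + m) := (hN _ _).le
          _ ≤ _ := pow_le_pow_right_of_le_one' (by simp) (by omega)
      refine ne_top_of_le_ne_top ?_ (ENNReal.tsum_le_tsum hle)
      rw [ENNReal.tsum_geometric]
      simp
    filter_upwards [h1] with x hx
    obtain ⟨a, ha⟩ := eventually_atTop.1 hx
    refine eventually_atTop.2 ⟨a + m, fun i hi => ?_⟩
    have h2 := ha (i - m) (by omega)
    rwa [Nat.sub_add_cancel (by omega)] at h2
  filter_upwards [hae, ae_all_iff.2 hBC] with x hx hx2 g ε hε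
  obtain ⟨k, hk⟩ := exists_nat_one_div_lt hε
  obtain ⟨m, hm⟩ := hs (g, k)
  have hem : e m = 1 / ((k : ℝ) + 1) := by simp [e, hm]
  filter_upwards [hx g (e m) (he m), hx2 m] with i hi hi2 j hj
  have hC : x ∈ C i m := by
    obtain ⟨n, hn⟩ := eventually_atTop.1 hi
    exact Set.mem_iUnion.2 ⟨n, by simpa [Good, hm] using hn⟩
  have hG : x ∈ Good i m (f i) := by
    by_contra h
    exact hi2 ⟨hC, h⟩
  have := hG j hj
  rw [hem, hm] at this
  exact this.trans hk

theorem diagonalization_of_two_amenability_witness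
    {X : Type*} [MeasurableSpace X] [StandardBorelSpace X]
    {G : Type*} [Group G] [Countable G] [MulAction G X]
    (hBorel : ∀ g : G, Measurable fun x : X => g • x)
    (E : X → X → Prop) (hEdef : ∀ x y, E x y ↔ ∃ g : G, g • x = y)
    (μ : Measure X) [IsProbabilityMeasure μ]
    (p : ℕ → ℕ → X → X → ℝ)
    (hprob : ∀ i j x, IsProbOnClass E (p i j x) x)
    (hmeas : ∀ i j, Measurable fun q : X × X => p i j q.1 q.2)
    (hae : ∀ᵐ x ∂μ, ∀ g : G, ∀ ε : ℝ, 0 < ε →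
      ∀ᶠ i in atTop, ∀ᶠ j in atTop, l1dist (p i j x) (p i j (g • x)) < ε) :
    ∃ f : ℕ → ℕ,
      (∀ᵐ x ∂μ, ∀ g : G, ∀ ε : ℝ, 0 < ε →
        ∀ᶠ i in atTop, ∀ j ≥ f i, l1dist (p i j x) (p i j (g • x)) < ε) ∧
      ∃ A : Set X, MeasurableSet A ∧ μ Aᶜ = 0 ∧
        ∀ x ∈ A, ∀ y ∈ A, E x y → ∀ ε : ℝ, 0 < ε →
          ∀ᶠ i in atTop, l1dist (p i (f i) x) (p i (f i) y) < ε := by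
  have hd : ∀ (g : G) i j, Measurable fun x => l1dist (p i j x) (p i j (g • x)) := by
    intro g i j
    refine aux_measurable_tsum hBorel (fun x y => |p i j x y - p i j (g • x) y|) ?_ ?_ ?_
    · have h2 : Measurable fun q : X × X => p i j (g • q.1) q.2 :=
        (hmeas i j).comp (((hBorel g).comp measurable_fst).prodMk measurable_snd)
      exact measurable_abs.comp ((hmeas i j).sub h2)
    · intro x y hy
      by_cases h1 : p i j x y = 0
      · have h2 : p i j (g • x) y ≠ 0 := by
          intro h2
          simp [h1, h2] at hy
        obtain ⟨h, hh⟩ := (hEdef _ _).1 ((hprob i j (g • x)).2.1 y h2)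
        exact ⟨h * g, by rw [mul_smul, hh]⟩
      · exact (hEdef _ _).1 ((hprob i j x).2.1 y h1)
    · intro x
      exact ((hprob i j x).2.2.summable.sub (hprob i j (g • x)).2.2.summable).abs
  obtain ⟨f, hf⟩ := aux_diag μ (fun g i j x => l1dist (p i j x) (p i j (g • x))) hd hae
  refine ⟨f, hf, ?_⟩
  obtain ⟨B, hB, hBm, hB0⟩ := exists_measurable_superset_of_null (ae_iff.1 hf)
  refine ⟨Bᶜ, hBm.compl, by simpa using hB0, ?_⟩
  intro x hx y _ hxy ε hε
  obtain ⟨g, rfl⟩ := (hEdef _ _).1 hxy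
  have hxg := not_not.1 fun h => hx (hB h)
  filter_upwards [hxg g ε hε] with i hi
  exact hi (f i) le_rfl
end

section
/- Let G be a countable group and let G ↷ X be a Borel action on a standard Borel space. If the stabilizer Stab(x) is uniformly coamenable in G for every x ∈ X, then the orbit equivalence relation E_G^X is Borel amenable. -/
open MeasureTheory Function Filter

/-! ### Helper lemmas -/

/-- The space of probability functions on a countable set is separable in `ℓ¹`. -/
lemma exists_dense_probFun (G : Type*) [Countable G] [Nonempty G] :
    ∃ D : ℕ → G → ℝ, (∀ n, IsProbFun (D n)) ∧
      ∀ p : G → ℝ, IsProbFun p → ∀ δ : ℝ, 0 < δ → ∃ n, l1dist p (D n) < δ := by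
  classical
  let P := {p : G → ℝ // IsProbFun p}
  have : SecondCountableTopology P :=
    TopologicalSpace.Subtype.secondCountableTopology {p : G → ℝ | IsProbFun p}
  have : Nonempty P := by
    obtain ⟨g⟩ := ‹Nonempty G›
    refine ⟨⟨Pi.single g 1, ?_, hasSum_pi_single g 1⟩⟩
    intro a
    by_cases h : a = g
    · subst h; simp
    · simp [h]
  refine ⟨fun n => (TopologicalSpace.denseSeq P n).1,
    fun n => (TopologicalSpace.denseSeq P n).2, ?_⟩
  intro p hp δ hδ
  have key : ∀ q : P, l1dist p q.1 = 2 * ∑' a, max (p a - q.1 a) 0 := by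
    intro q
    have hd : HasSum (fun a => p a - q.1 a) 0 := by
      simpa using hp.2.sub q.2.2
    have hm : Summable (fun a => max (p a - q.1 a) 0) :=
      Summable.of_nonneg_of_le (fun a => le_max_right _ _)
        (fun a => max_le (by linarith [q.2.1 a]) (hp.1 a)) hp.2.summable
    have h1 := (hm.hasSum.mul_left 2).sub hd
    rw [sub_zero] at h1
    rw [← h1.tsum_eq]
    unfold l1dist
    congr 1
    funext a
    rcases le_total (p a - q.1 a) 0 with h | h
    · rw [abs_of_nonpos h, max_eq_right h]; ring
    · rw [abs_of_nonneg h, max_eq_left h]; ring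
  have ht : Tendsto (fun q : P => ∑' a, max (p a - q.1 a) 0) (nhds ⟨p, hp⟩)
      (nhds (∑' _ : G, (0 : ℝ))) := by
    refine tendsto_tsum_of_dominated_convergence (bound := p) hp.2.summable ?_ ?_
    · intro a
      have hc : Continuous (fun q : P => max (p a - q.1 a) 0) := by
        have : Continuous (fun q : P => q.1 a) :=
          (continuous_apply a).comp continuous_subtype_val
        exact (continuous_const.sub this).max continuous_const
      have := hc.tendsto ⟨p, hp⟩
      simpa using this
    · refine Eventually.of_forall fun q a => ?_
      rw [Real.norm_of_nonneg (le_max_right _ _)]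
      exact max_le (by linarith [q.2.1 a]) (hp.1 a)
  have hev : ∀ᶠ q : P in nhds ⟨p, hp⟩, l1dist p q.1 < δ := by
    rw [tsum_zero] at ht
    filter_upwards [ht.eventually (gt_mem_nhds (half_pos hδ))] with q hq
    rw [key]
    linarith
  obtain ⟨q, ⟨n, rfl⟩, hq⟩ :=
    (TopologicalSpace.denseRange_denseSeq P).inter_nhds_nonempty hev
  exact ⟨n, hq⟩

lemma measurableSet_forall_countable {X ι : Type*} [MeasurableSpace X] [Countable ι]
    {P : ι → X → Prop} (h : ∀ i, MeasurableSet {x | P i x}) :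
    MeasurableSet {x | ∀ i, P i x} := by
  rw [Set.ofPred_forall]
  exact MeasurableSet.iInter h

section PushLemmas

variable {G X : Type*} [Group G] [MulAction G X]

lemma hasSum_push {f : G → ℝ} {a : ℝ} (hf : HasSum f a) (x : X) :
    HasSum (pushMeasure f x) a :=
  hf.tsum_fiberwise (fun g : G => g • x)

lemma push_nonneg {p : G → ℝ} (hp : IsProbFun p) (x y : X) : 0 ≤ pushMeasure p x y :=
  tsum_nonneg fun g => hp.1 g.1

lemma push_ne_zero {p : G → ℝ} {x y : X} (h : pushMeasure p x y ≠ 0) :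
    ∃ g : G, g • x = y := by
  by_contra hne
  apply h
  unfold pushMeasure
  have : IsEmpty {g : G // g • x = y} := ⟨fun g => hne ⟨g.1, g.2⟩⟩
  exact tsum_empty

lemma summable_push_sub {p q : G → ℝ} (hp : Summable p) (hq : Summable q) (x x' : X) :
    Summable (fun y => |pushMeasure p x y - pushMeasure q x' y|) :=
  ((hasSum_push hp.hasSum x).summable.sub (hasSum_push hq.hasSum x').summable).abs

lemma l1dist_push_le {p q : G → ℝ} (hp : Summable p) (hq : Summable q) (x : X) :
    l1dist (pushMeasure p x) (pushMeasure q x) ≤ l1dist p q := by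
  have hs : Summable (fun a => |p a - q a|) := (hp.sub hq).abs
  have h1 := hasSum_push hs.hasSum x
  unfold l1dist
  rw [← h1.tsum_eq]
  refine Summable.tsum_le_tsum (fun y => ?_) (summable_push_sub hp hq x x) h1.summable
  unfold pushMeasure
  have e := Summable.tsum_sub (hp.subtype {g : G | g • x = y}) (hq.subtype {g : G | g • x = y})
  refine le_trans (le_of_eq (congrArg abs e.symm)) ?_
  exact norm_tsum_le_tsum_norm (f := fun g : {g : G // g • x = y} => p g.1 - q g.1)
    (hs.subtype _)

lemma l1dist_push_triangle {p q : G → ℝ} (hp : Summable p) (hq : Summable q) (x x' : X) :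
    l1dist (pushMeasure q x) (pushMeasure q x') ≤
      l1dist (pushMeasure p x) (pushMeasure p x') + 2 * l1dist p q := by
  have h1 := l1dist_push_le hp hq x
  have h2 := l1dist_push_le hp hq x'
  have s1 := summable_push_sub hp hq x x
  have s2 := summable_push_sub hp hq x' x'
  have s3 := summable_push_sub hp hp x x'
  have s4 := summable_push_sub hq hq x x'
  have : l1dist (pushMeasure q x) (pushMeasure q x') ≤
      l1dist (pushMeasure p x) (pushMeasure p x') + l1dist (pushMeasure p x) (pushMeasure q x)
        + l1dist (pushMeasure p x') (pushMeasure q x') := by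
    unfold l1dist
    rw [← Summable.tsum_add s3 s1, ← Summable.tsum_add (s3.add s1) s2]
    refine Summable.tsum_le_tsum (fun y => ?_) s4 ((s3.add s1).add s2)
    set a := pushMeasure q x y
    set b := pushMeasure q x' y
    set c := pushMeasure p x y
    set d := pushMeasure p x' y
    have e : a - b = (c - d) - (c - a) + (d - b) := by ring
    calc |a - b| = |(c - d) - (c - a) + (d - b)| := by rw [e]
      _ ≤ |(c - d) - (c - a)| + |d - b| := abs_add_le _ _
      _ ≤ _ := by gcongr; exact abs_sub _ _
  linarith

/-- Orbit maps from the coset space preserve the `ℓ¹` distance of pushforwards. -/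
lemma l1dist_push_quotient (p : G → ℝ) (x : X) (s g : G) :
    l1dist (pushMeasure p (g • x)) (pushMeasure p (s • g • x)) =
      l1dist (pushMeasure p (g : G ⧸ MulAction.stabilizer G x))
        (pushMeasure p (s • (g : G ⧸ MulAction.stabilizer G x))) := by
  set φ : G ⧸ MulAction.stabilizer G x → X := MulAction.ofQuotientStabilizer G x with hφ
  have hinj : Function.Injective φ := MulAction.injective_ofQuotientStabilizer G x
  have hsm : ∀ (k : G) y, φ (k • y) = k • φ y := MulAction.ofQuotientStabilizer_smul G x
  have hpush : ∀ y z, pushMeasure p (φ y) (φ z) = pushMeasure p y z := by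
    intro y z
    unfold pushMeasure
    have : ∀ k : G, k • φ y = φ z ↔ k • y = z := by
      intro k
      rw [← hsm, hinj.eq_iff]
    exact (Equiv.subtypeEquivRight this).tsum_eq
      (fun g : {g : G // g • y = z} => p g.1)
  have hg : g • x = φ (g : G ⧸ MulAction.stabilizer G x) := rfl
  rw [hg, ← hsm]
  unfold l1dist
  rw [← hinj.tsum_eq]
  · simp only [hpush]
  · intro y hy
    have : ∃ (k : G) (z : G ⧸ MulAction.stabilizer G x), k • φ z = y := by
      by_contra hne
      push Not at hne
      apply hy
      have e : ∀ z, pushMeasure p (φ z) y = 0 := by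
        intro z
        by_contra h
        obtain ⟨k, hk⟩ := push_ne_zero h
        exact hne k z hk
      simp [e]
    obtain ⟨k, z, rfl⟩ := this
    exact ⟨k • z, hsm k z⟩

variable [Countable G] [MeasurableSpace X] [StandardBorelSpace X]

lemma measurable_push (hBorel : ∀ g : G, Measurable fun x : X => g • x) (p : G → ℝ) :
    Measurable fun q : X × X => pushMeasure p q.1 q.2 := by
  classical
  have : (fun q : X × X => pushMeasure p q.1 q.2) =
      fun q : X × X => ∑' g : G, if g • q.1 = q.2 then p g else 0 := by
    funext q
    have := tsum_subtype {g : G | g • q.1 = q.2} p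
    refine Eq.trans this (tsum_congr fun g => ?_)
    simp [Set.indicator_apply]
  rw [this]
  refine Measurable.tsum fun g => ?_
  refine Measurable.ite ?_ measurable_const measurable_const
  exact measurableSet_eq_fun ((hBorel g).comp measurable_fst) measurable_snd

lemma l1dist_push_le_iff {p : G → ℝ} (hp : Summable p) (x : X) (s g : G) (ε : ℝ) :
    l1dist (pushMeasure p (g • x)) (pushMeasure p (s • g • x)) ≤ ε ↔
      ∀ T : Finset G, (∀ a ∈ T, ∀ b ∈ T, a • x = b • x → a = b) →
        ∑ h ∈ T, |pushMeasure p (g • x) (h • x) - pushMeasure p (s • g • x) (h • x)| ≤ ε := by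
  classical
  have hs := summable_push_sub hp hp (g • x) (s • g • x)
  constructor
  · intro h T hT
    refine le_trans ?_ h
    have := hs.sum_le_tsum (T.image (· • x)) (fun _ _ => abs_nonneg _)
    rwa [Finset.sum_image (fun a ha b hb hab => hT a ha b hb hab)] at this
  · intro h
    refine Real.tsum_le_of_sum_le (fun _ => abs_nonneg _) fun U => ?_
    let V := U.filter (fun y => ∃ k : G, k • x = y)
    have hV : ∀ y ∈ V, ∃ k : G, k • x = y := fun y hy => (Finset.mem_filter.1 hy).2
    choose! c hc using hV
    have hcinj : Set.InjOn c V := by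
      intro a ha b hb hab
      rw [← hc a ha, ← hc b hb, hab]
    have e := h (V.image c) (by
      intro a ha b hb hab
      obtain ⟨a', ha', rfl⟩ := Finset.mem_image.1 ha
      obtain ⟨b', hb', rfl⟩ := Finset.mem_image.1 hb
      rw [hc a' ha', hc b' hb'] at hab
      rw [hab])
    rw [Finset.sum_image hcinj] at e
    refine le_trans (le_of_eq ?_) e
    have : ∀ y ∈ V, |pushMeasure p (g • x) (c y • x) - pushMeasure p (s • g • x) (c y • x)| =
        |pushMeasure p (g • x) y - pushMeasure p (s • g • x) y| := by
      intro y hy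
      rw [hc y hy]
    rw [Finset.sum_congr rfl this]
    symm
    refine Finset.sum_subset (Finset.filter_subset _ _) fun y hyU hyV => ?_
    have hno : ∀ k : G, k • x ≠ y := fun k hk =>
      hyV (Finset.mem_filter.2 ⟨hyU, k, hk⟩)
    have z1 : pushMeasure p (g • x) y = 0 := by
      by_contra hne
      obtain ⟨k, hk⟩ := push_ne_zero hne
      exact hno (k * g) (by rw [mul_smul, hk])
    have z2 : pushMeasure p (s • g • x) y = 0 := by
      by_contra hne
      obtain ⟨k, hk⟩ := push_ne_zero hne
      exact hno (k * (s * g)) (by rw [mul_smul, mul_smul, hk])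
    simp [z1, z2]

lemma measurableSet_l1dist_push (hBorel : ∀ g : G, Measurable fun x : X => g • x)
    {p : G → ℝ} (hp : Summable p) (s g : G) (ε : ℝ) :
    MeasurableSet {x : X |
      l1dist (pushMeasure p (g • x)) (pushMeasure p (s • g • x)) ≤ ε} := by
  simp only [l1dist_push_le_iff hp]
  refine measurableSet_forall_countable fun T => ?_
  refine MeasurableSet.imp ?_ ?_
  · refine measurableSet_forall_countable fun a => MeasurableSet.imp (MeasurableSet.const _) ?_
    refine measurableSet_forall_countable fun b => MeasurableSet.imp (MeasurableSet.const _) ?_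
    exact MeasurableSet.imp (measurableSet_eq_fun (hBorel a) (hBorel b)) (MeasurableSet.const _)
  · refine measurableSet_le ?_ measurable_const
    refine Finset.measurable_sum _ fun h _ => ?_
    have m := measurable_push hBorel p
    have m1 := m.comp ((hBorel g).prodMk (hBorel h))
    have m2 := m.comp (((hBorel s).comp (hBorel g)).prodMk (hBorel h))
    exact (m1.sub m2).abs

end PushLemmas

/-! ### STATEMENT 7 -/

theorem borel_amenable_of_uniformly_coamenable_stabilizers
    {X : Type*} [MeasurableSpace X] [StandardBorelSpace X]
    {G : Type*} [Group G] [Countable G] [MulAction G X]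
    (hBorel : ∀ g : G, Measurable fun x : X => g • x)
    (hstab : ∀ x : X, UniformlyCoamenable (MulAction.stabilizer G x)) :
    BorelAmenable fun x y : X => ∃ g : G, g • x = y := by
  classical
  obtain ⟨D, hD, hdense⟩ := exists_dense_probFun G
  obtain ⟨e, he⟩ := exists_surjective_nat G
  let S : ℕ → Finset G := fun i => (Finset.range (i + 1)).image e
  let R : ℕ → ℕ → X → Prop := fun i m x => ∀ s ∈ S i, ∀ g : G,
    l1dist (pushMeasure (D m) (g • x)) (pushMeasure (D m) (s • g • x)) ≤ 1 / ((i : ℝ) + 1)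
  have hRmeas : ∀ i m, MeasurableSet {x | R i m x} := by
    intro i m
    refine measurableSet_forall_countable fun s => MeasurableSet.imp (MeasurableSet.const _) ?_
    exact measurableSet_forall_countable fun g =>
      measurableSet_l1dist_push hBorel (hD m).2.summable s g _
  have hRex : ∀ i x, ∃ m, R i m x := by
    intro i x
    have hpos : (0 : ℝ) < 1 / ((i : ℝ) + 1) := by positivity
    obtain ⟨p, hp, hpS⟩ := hstab x (S i) (1 / ((i : ℝ) + 1) / 2) (half_pos hpos)
    obtain ⟨m, hm⟩ := hdense p hp (1 / ((i : ℝ) + 1) / 4) (by linarith)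
    refine ⟨m, fun s hs g => ?_⟩
    have h1 := hpS s hs (g : G ⧸ MulAction.stabilizer G x)
    rw [← l1dist_push_quotient] at h1
    have h2 := l1dist_push_triangle hp.2.summable (hD m).2.summable (g • x) (s • g • x)
    linarith
  have hRinv : ∀ i m x (k : G), R i m (k • x) ↔ R i m x := by
    intro i m x k
    constructor
    · intro h s hs g
      have := h s hs (g * k⁻¹)
      simpa [smul_smul, mul_assoc] using this
    · intro h s hs g
      have := h s hs (g * k)
      simpa [smul_smul, mul_assoc] using this
  refine ⟨fun i x y => pushMeasure (D (Nat.find (hRex i x))) x y, ?_, ?_, ?_⟩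
  · intro i x
    exact ⟨fun y => push_nonneg (hD _) x y, fun y hy => push_ne_zero hy,
      hasSum_push (hD _).2 x⟩
  · intro i
    exact Measurable.find (f := fun m (q : X × X) => pushMeasure (D m) q.1 q.2)
      (p := fun m (q : X × X) => R i m q.1)
      (fun m => measurable_push hBorel (D m))
      (fun m => measurable_fst (hRmeas i m)) (fun q => hRex i q.1)
  · rintro x y ⟨k, rfl⟩ ε hε
    obtain ⟨n, rfl⟩ := he k
    obtain ⟨N, hN⟩ := exists_nat_one_div_lt hε
    filter_upwards [eventually_ge_atTop (max n N)] with i hi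
    have hfind : Nat.find (hRex i (e n • x)) = Nat.find (hRex i x) := by
      simp only [hRinv]
    rw [hfind]
    have h1 := Nat.find_spec (hRex i x) (e n)
      (Finset.mem_image_of_mem e (Finset.mem_range.2 (by
        have := le_max_left n N
        omega))) 1
    rw [one_smul] at h1
    refine lt_of_le_of_lt h1 (lt_of_le_of_lt ?_ hN)
    have : (N : ℝ) ≤ i := by exact_mod_cast (le_max_right n N).trans hi
    exact one_div_le_one_div_of_le (by positivity) (by linarith)
end

section
/- Let E be a CBER on a standard Borel space X, and let (A_n)_{n∈ℕ} be a cover of X by Borel sets. If each restriction E↾A_n is Borel amenable, then E is Borel amenable. -/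
open MeasureTheory Function Filter

/-! ### A Lusin–Novikov theorem for countable-to-one maps -/

section LusinNovikov

open Set Topology

/-- A countable union of measurable sets on which `a` is injective. -/
def LNSmall {Z X : Type*} [MeasurableSpace Z] (a : Z → X) (G : Set Z) : Prop :=
  ∃ C : ℕ → Set Z, (∀ k, MeasurableSet (C k) ∧ InjOn a (C k)) ∧ G = ⋃ k, C k

/-- The family `U` has members meeting a common fiber off every small set. -/
def LNGood {Z X : Type*} [MeasurableSpace Z] (a : Z → X) (U : Set (Set Z)) : Prop :=
  ∀ G, LNSmall a G → ∃ x, ∀ V ∈ U, ∃ z ∈ V, z ∉ G ∧ a z = x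

lemma LNSmall.meas {Z X : Type*} [MeasurableSpace Z] {a : Z → X} {G : Set Z}
    (h : LNSmall a G) : MeasurableSet G := by
  obtain ⟨C, hC, rfl⟩ := h
  exact MeasurableSet.iUnion fun k => (hC k).1

lemma LNSmall.of_inj {Z X : Type*} [MeasurableSpace Z] {a : Z → X} {G : Set Z}
    (h : MeasurableSet G) (hi : InjOn a G) : LNSmall a G :=
  ⟨fun _ => G, fun _ => ⟨h, hi⟩, (iUnion_const G).symm⟩

lemma LNSmall.iUnion {Z X ι : Type*} [Countable ι] [MeasurableSpace Z] {a : Z → X}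
    {G : ι → Set Z} (h : ∀ i, LNSmall a (G i)) : LNSmall a (⋃ i, G i) := by
  choose C hC hG using h
  rcases isEmpty_or_nonempty ι with hι | hι
  · exact .of_inj (by simp) (by simp)
  obtain ⟨e, he⟩ := exists_surjective_nat (ι × ℕ)
  refine ⟨fun k => C (e k).1 (e k).2, fun k => hC _ _, ?_⟩
  ext z
  simp only [hG, mem_iUnion]
  constructor
  · rintro ⟨i, j, h⟩
    obtain ⟨k, hk⟩ := he (i, j)
    exact ⟨k, by rw [hk]; exact h⟩
  · rintro ⟨k, h⟩
    exact ⟨_, _, h⟩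

lemma LNSmall.union {Z X : Type*} [MeasurableSpace Z] {a : Z → X} {G H : Set Z}
    (h : LNSmall a G) (h' : LNSmall a H) : LNSmall a (G ∪ H) := by
  rw [union_eq_iUnion]
  exact LNSmall.iUnion fun b => by cases b <;> assumption

lemma analytic_preimage {Z X : Type*} [TopologicalSpace Z] [PolishSpace Z] [TopologicalSpace X]
    [T2Space X] {f : Z → X} (hf : Continuous f) {W : Set X} (hW : AnalyticSet W) :
    AnalyticSet (f ⁻¹' W) := by
  obtain ⟨γ, _, _, g, hg, rfl⟩ := analyticSet_iff_exists_polishSpace_range.1 hW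
  have hc : IsClosed {p : Z × γ | f p.1 = g p.2} :=
    isClosed_eq (hf.comp continuous_fst) (hg.comp continuous_snd)
  convert hc.analyticSet.image_of_continuous continuous_fst using 1
  ext z
  simp [eq_comm]

lemma analytic_forall {X ι : Type*} [TopologicalSpace X] [PolishSpace X] {U : Set ι}
    (hU : U.Countable) {f : ι → Set X} (hf : ∀ i ∈ U, AnalyticSet (f i)) :
    AnalyticSet {x | ∀ i ∈ U, x ∈ f i} := by
  have := hU.to_subtype
  have h : AnalyticSet (⋂ o : Option U, o.elim univ (fun i => f i)) := by
    refine AnalyticSet.iInter fun o => ?_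
    cases o with
    | none => exact isClosed_univ.analyticSet
    | some i => exact hf i i.2
  convert h using 1
  ext x
  simp [Option.forall]

lemma analytic_inter {X : Type*} [TopologicalSpace X] [PolishSpace X] {s t : Set X}
    (hs : AnalyticSet s) (ht : AnalyticSet t) : AnalyticSet (s ∩ t) := by
  rw [inter_eq_iInter]
  exact AnalyticSet.iInter fun b => by cases b <;> assumption

variable {Z X : Type*} [TopologicalSpace Z] [PolishSpace Z] [MeasurableSpace Z] [BorelSpace Z]
  [TopologicalSpace X] [PolishSpace X] {a : Z → X}

lemma analytic_neighbors (ha : Continuous a) {S : Set Z} (hS : AnalyticSet S) :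
    AnalyticSet {z | ∃ z' ∈ S, z' ≠ z ∧ a z = a z'} := by
  have h1 : AnalyticSet {p : Z × Z | p.2 ≠ p.1} :=
    MeasurableSet.analyticSet (isOpen_ne_fun continuous_snd continuous_fst).measurableSet
  have h2 : AnalyticSet {p : Z × Z | a p.1 = a p.2} :=
    (isClosed_eq (ha.comp continuous_fst) (ha.comp continuous_snd)).analyticSet
  have h3 : AnalyticSet ((Prod.snd : Z × Z → Z) ⁻¹' S) := analytic_preimage continuous_snd hS
  convert (analytic_inter h3 (analytic_inter h1 h2)).image_of_continuous continuous_fst using 1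
  ext z
  simp

lemma LN_reflect (ha : Continuous a) {S : Set Z} (hS : AnalyticSet S) (hi : InjOn a S) :
    ∃ B, MeasurableSet B ∧ S ⊆ B ∧ InjOn a B := by
  obtain ⟨B, hSB, hdB, hB⟩ := hS.measurablySeparable (analytic_neighbors ha hS) (by
    rw [Set.disjoint_left]
    rintro z hz ⟨z', hz', hne, he⟩
    exact hne (hi hz' hz he.symm))
  obtain ⟨C, hSC, hdC, hC⟩ := hS.measurablySeparable (analytic_neighbors ha hB.analyticSet) (by
    rw [Set.disjoint_left]
    rintro z hz ⟨z', hz', hne, he⟩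
    exact Set.disjoint_left.1 hdB ⟨z, hz, hne.symm, he.symm⟩ hz')
  refine ⟨B ∩ C, hB.inter hC, subset_inter hSB hSC, ?_⟩
  intro z hz z' hz' he
  by_contra hne
  exact Set.disjoint_left.1 hdC ⟨z', hz'.1, fun h => hne h.symm, he⟩ hz.2

lemma LN_split (ha : Continuous a) {U : Set (Set Z)} (hfin : U.Finite)
    (hopen : ∀ V ∈ U, IsOpen V) (hgood : LNGood a U) {F : Set (Set Z)} (hF : F ⊆ U) :
    ∀ G, LNSmall a G → ∃ x, (∀ V ∈ U, ∃ z ∈ V, z ∉ G ∧ a z = x) ∧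
      ∀ V ∈ F, ∃ z ∈ V, ∃ z' ∈ V, z ∉ G ∧ z' ∉ G ∧ z ≠ z' ∧ a z = x ∧ a z' = x := by
  induction F, hfin.subset hF using Set.Finite.induction_on with
  | empty =>
    intro G hG
    obtain ⟨x, hx⟩ := hgood G hG
    exact ⟨x, hx, by simp⟩
  | @insert V F hVF hFf ih =>
    intro G hG
    have hVU : V ∈ U := hF (mem_insert _ _)
    have hFU : F ⊆ U := fun W hW => hF (mem_insert_of_mem _ hW)
    by_contra hcon
    push Not at hcon
    have hGm := hG.meas
    let W : Set X := {x | ∀ V ∈ U, x ∈ a '' (V \ G)} ∩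
      {x | ∀ V ∈ F, x ∈ (fun p : Z × Z => a p.1) '' 
        (((V \ G) ×ˢ (V \ G)) ∩ ({p | p.1 ≠ p.2} ∩ {p | a p.1 = a p.2}))}
    have hWa : AnalyticSet W := by
      refine analytic_inter (analytic_forall hfin.countable fun V hV => ?_)
        (analytic_forall hFf.countable fun V hV => ?_)
      · exact ((hopen V hV).measurableSet.diff hGm).analyticSet.image_of_continuous ha
      · have hm := (hopen V (hFU hV)).measurableSet.diff hGm
        refine AnalyticSet.image_of_continuous (MeasurableSet.analyticSet ?_)
          (ha.comp continuous_fst)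
        exact (hm.prod hm).inter
          ((isOpen_ne_fun continuous_fst continuous_snd).measurableSet.inter
          (isClosed_eq (ha.comp continuous_fst) (ha.comp continuous_snd)).measurableSet)
    have hWmem : ∀ x, x ∈ W ↔ (∀ V ∈ U, ∃ z ∈ V, z ∉ G ∧ a z = x) ∧
        ∀ V ∈ F, ∃ z ∈ V, ∃ z' ∈ V, z ∉ G ∧ z' ∉ G ∧ z ≠ z' ∧ a z = x ∧ a z' = x := by
      intro x
      refine and_congr (forall₂_congr fun V _ => ?_) (forall₂_congr fun V _ => ?_)
      · simp [and_assoc]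
      · constructor
        · rintro ⟨⟨z, z'⟩, ⟨⟨⟨h1, h2⟩, h3, h4⟩, h5, h6⟩, h7⟩
          exact ⟨z, h1, z', h3, h2, h4, h5, h7, h6.symm.trans h7⟩
        · rintro ⟨z, h1, z', h3, h2, h4, h5, h7, h8⟩
          exact ⟨⟨z, z'⟩, ⟨⟨⟨h1, h2⟩, h3, h4⟩, h5, h7.trans h8.symm⟩, h7⟩
    have hHa : AnalyticSet ((V \ G) ∩ a ⁻¹' W) :=
      analytic_inter ((hopen V hVU).measurableSet.diff hGm).analyticSet
        (analytic_preimage ha hWa)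
    have hHi : InjOn a ((V \ G) ∩ a ⁻¹' W) := by
      rintro z ⟨⟨hzV, hzG⟩, hzW⟩ z' ⟨⟨hzV', hzG'⟩, hzW'⟩ he
      by_contra hne
      obtain ⟨h1, h2⟩ := (hWmem _).1 hzW
      obtain ⟨V', hV', h3⟩ := hcon (a z) h1
      rcases hV' with rfl | hV'
      · exact h3 z hzV z' hzV' hzG hzG' hne rfl he.symm
      · obtain ⟨w, hw, w', hw', h4, h5, h6, h7, h8⟩ := h2 V' hV'
        exact h3 w hw w' hw' h4 h5 h6 h7 h8
    obtain ⟨B, hB, hHB, hBi⟩ := LN_reflect ha hHa hHi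
    obtain ⟨x, hx1, hx2⟩ := ih hFU (G ∪ B) (hG.union (.of_inj hB hBi))
    obtain ⟨z, hzV, hzG, rfl⟩ := hx1 V hVU
    refine hzG (Or.inr (hHB ⟨⟨hzV, fun h => hzG (Or.inl h)⟩, ?_⟩))
    refine (hWmem _).2 ⟨fun V hV => ?_, fun V hV => ?_⟩
    · obtain ⟨z, h1, h2, h3⟩ := hx1 V hV
      exact ⟨z, h1, fun h => h2 (Or.inl h), h3⟩
    · obtain ⟨w, hw, w', hw', h4, h5, h6⟩ := hx2 V hV
      exact ⟨w, hw, w', hw', fun h => h4 (Or.inl h), fun h => h5 (Or.inl h), h6⟩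

end LusinNovikov

section LusinNovikovMetric

open Set Topology

variable {Z X : Type*} [MetricSpace Z] [CompleteSpace Z] [SecondCountableTopology Z]
  [MeasurableSpace Z] [BorelSpace Z] [TopologicalSpace X] [PolishSpace X] {a : Z → X}

lemma LN_refine (ha : Continuous a) {U : Set (Set Z)} (hfin : U.Finite)
    (hopen : ∀ V ∈ U, IsOpen V) (hgood : LNGood a U) {ε : ℝ} (hε : 0 < ε) :
    ∃ f : Bool → Set Z → Set Z,
      (∀ b, ∀ V ∈ U, IsOpen (f b V) ∧ f b V ⊆ V ∧ ∀ z ∈ f b V, ∀ z' ∈ f b V, dist z z' ≤ ε) ∧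
      (∀ V ∈ U, Disjoint (closure (f false V)) (closure (f true V))) ∧
      LNGood a (⋃ b, f b '' U) := by
  classical
  let B := TopologicalSpace.countableBasis Z
  have hBb : TopologicalSpace.IsTopologicalBasis B := TopologicalSpace.isBasis_countableBasis Z
  have : Countable B := (TopologicalSpace.countable_countableBasis Z).to_subtype
  have : Finite U := hfin.to_subtype
  let f : (Bool × U → B) → Bool → Set Z → Set Z := fun c b V =>
    if h : V ∈ U then (c (b, ⟨V, h⟩) : Set Z) else ∅
  have hf : ∀ c b V (h : V ∈ U), f c b V = (c (b, ⟨V, h⟩) : Set Z) := by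
    intro c b V h
    simp [f, h]
  let adm : (Bool × U → B) → Prop := fun c =>
      (∀ b, ∀ V ∈ U, IsOpen (f c b V) ∧ f c b V ⊆ V ∧
        ∀ z ∈ f c b V, ∀ z' ∈ f c b V, dist z z' ≤ ε) ∧
      (∀ V ∈ U, Disjoint (closure (f c false V)) (closure (f c true V)))
  by_contra hcon
  have hbad : ∀ c, ∃ G, LNSmall a G ∧
      (adm c → ¬ ∃ x, ∀ V ∈ (⋃ b, f c b '' U), ∃ z ∈ V, z ∉ G ∧ a z = x) := by
    intro c
    by_cases hc : adm c
    · have : ¬ LNGood a (⋃ b, f c b '' U) := fun h => hcon ⟨f c, hc.1, hc.2, h⟩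
      unfold LNGood at this
      push Not at this
      obtain ⟨G, hG, h⟩ := this
      refine ⟨G, hG, fun _ => ?_⟩
      push Not
      exact h
    · exact ⟨∅, .of_inj (by simp) (by simp), fun h => absurd h hc⟩
  choose G hG hGbad using hbad
  obtain ⟨x, -, hx⟩ := LN_split ha hfin hopen hgood subset_rfl _ (LNSmall.iUnion hG)
  have hpick : ∀ V : U, ∃ c : Bool → B, (∀ b, (c b : Set Z) ⊆ V ∧
      (∀ z ∈ (c b : Set Z), ∀ z' ∈ (c b : Set Z), dist z z' ≤ ε) ∧
      ∃ z ∈ (c b : Set Z), z ∉ (⋃ c, G c) ∧ a z = x) ∧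
      Disjoint (closure (c false : Set Z)) (closure (c true : Set Z)) := by
    rintro ⟨V, hV⟩
    obtain ⟨z, hz, z', hz', h1, h2, hne, h3, h4⟩ := hx V hV
    have hd : 0 < dist z z' := dist_pos.2 hne
    let r := min (ε / 2) (dist z z' / 3)
    have hr : 0 < r := by positivity
    have key : ∀ w ∈ V, ∃ b ∈ B, w ∈ b ∧ b ⊆ V ∩ Metric.ball w r := fun w hw =>
      hBb.exists_subset_of_mem_open ⟨hw, Metric.mem_ball_self hr⟩
        ((hopen V hV).inter Metric.isOpen_ball)
    obtain ⟨b, hb, hzb, hbs⟩ := key z hz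
    obtain ⟨b', hb', hzb', hbs'⟩ := key z' hz'
    have hdiam : ∀ w : Z, ∀ s : Set Z, s ⊆ V ∩ Metric.ball w r →
        ∀ u ∈ s, ∀ v ∈ s, dist u v ≤ ε := by
      intro w s hs u hu v hv
      have h1 := (hs hu).2
      have h2 := (hs hv).2
      rw [Metric.mem_ball] at h1 h2
      have h3 := dist_triangle_right u v w
      have h4 : r ≤ ε / 2 := min_le_left _ _
      linarith
    refine ⟨fun t => if t then ⟨b', hb'⟩ else ⟨b, hb⟩, ?_, ?_⟩
    · rintro (_ | _)
      · exact ⟨fun u hu => (hbs hu).1, hdiam z b hbs, z, hzb, h1, h3⟩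
      · exact ⟨fun u hu => (hbs' hu).1, hdiam z' b' hbs', z', hzb', h2, h4⟩
    · have hcl : ∀ w : Z, ∀ s : Set Z, s ⊆ V ∩ Metric.ball w r →
          closure s ⊆ Metric.closedBall w r := fun w s hs =>
        closure_minimal (fun u hu => Metric.ball_subset_closedBall (hs hu).2)
          Metric.isClosed_closedBall
      refine Disjoint.mono (hcl z b hbs) (hcl z' b' hbs') ?_
      apply Metric.closedBall_disjoint_closedBall
      have h4 : r ≤ dist z z' / 3 := min_le_right _ _
      linarith
  choose c hc hcd using hpick
  let c' : Bool × U → B := fun p => c p.2 p.1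
  refine hGbad c' ⟨fun b V hV => ?_, fun V hV => ?_⟩ ⟨x, ?_⟩
  · rw [hf _ _ _ hV]
    exact ⟨hBb.isOpen (c' (b, ⟨V, hV⟩)).2, (hc ⟨V, hV⟩ b).1, (hc ⟨V, hV⟩ b).2.1⟩
  · rw [hf _ _ _ hV, hf _ _ _ hV]
    exact hcd ⟨V, hV⟩
  · intro V hV
    obtain ⟨b, V', hV', rfl⟩ := mem_iUnion.1 hV
    rw [hf _ _ _ hV']
    obtain ⟨z, h1, h2, h3⟩ := (hc ⟨V', hV'⟩ b).2.2
    exact ⟨z, h1, fun h => h2 (mem_iUnion.2 ⟨_, h⟩), h3⟩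

lemma LN_metric (ha : Continuous a) (hcount : ∀ x, (a ⁻¹' {x}).Countable) :
    LNSmall a (univ : Set Z) := by
  by_contra hns
  let St := {U : Set (Set Z) // U.Finite ∧ (∀ V ∈ U, IsOpen V) ∧ LNGood a U}
  have hpos : ∀ n : ℕ, (0 : ℝ) < (1 / 2) ^ n := fun n => by positivity
  choose f hf1 hf2 hf3 using fun (n : ℕ) (U : St) =>
    LN_refine ha U.2.1 U.2.2.1 U.2.2.2 (hpos n)
  let next : ℕ → St → St := fun n U => ⟨⋃ b, f n U b '' U.1,
    finite_iUnion fun b => U.2.1.image _, by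
      intro V hV
      obtain ⟨b, V', hV', rfl⟩ := mem_iUnion.1 hV
      exact (hf1 n U b V' hV').1, hf3 n U⟩
  have h0 : LNGood a ({univ} : Set (Set Z)) := by
    intro G hG
    have : ∃ z, z ∉ G := by
      by_contra h
      push Not at h
      exact hns (by rwa [← eq_univ_of_forall h])
    obtain ⟨z, hz⟩ := this
    exact ⟨a z, by simpa using ⟨z, hz, rfl⟩⟩
  let U : ℕ → St := fun n => Nat.rec ⟨{univ}, finite_singleton _, by simp, h0⟩ next n
  have hU0 : (U 0).1 = {univ} := rfl
  have hUs : ∀ n, U (n + 1) = next n (U n) := fun n => rfl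
  let K : (ℕ → Bool) → ℕ → Set Z := fun b n => Nat.rec univ (fun n V => f n (U n) (b n) V) n
  have hKs : ∀ b n, K b (n + 1) = f n (U n) (b n) (K b n) := fun b n => rfl
  have hKU : ∀ b n, K b n ∈ (U n).1 := by
    intro b n
    induction n with
    | zero => exact mem_singleton _
    | succ n ih =>
      rw [hUs, hKs]
      exact mem_iUnion.2 ⟨b n, mem_image_of_mem _ ih⟩
  have hKsub : ∀ b n, K b (n + 1) ⊆ K b n := fun b n => (hf1 n (U n) (b n) _ (hKU b n)).2.1
  have hKanti : ∀ b, Antitone (K b) := fun b => antitone_nat_of_succ_le (hKsub b)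
  have hKd : ∀ b n, ∀ z ∈ K b (n + 1), ∀ z' ∈ K b (n + 1), dist z z' ≤ (1 / 2) ^ n :=
    fun b n => (hf1 n (U n) (b n) _ (hKU b n)).2.2
  have hempty : LNSmall a (∅ : Set Z) := .of_inj (by simp) (by simp)
  have hpt : ∀ n, ∃ x, ∀ b, ∃ z ∈ K b n, a z = x := by
    intro n
    obtain ⟨x, hx⟩ := (U n).2.2.2 ∅ hempty
    refine ⟨x, fun b => ?_⟩
    obtain ⟨z, h1, -, h2⟩ := hx _ (hKU b n)
    exact ⟨z, h1, h2⟩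
  choose x w hwK hwx using hpt
  have hlim : ∀ b, ∃ z, Tendsto (fun n => w (n + 1) b) atTop (𝓝 z) := by
    intro b
    apply cauchySeq_tendsto_of_complete
    refine cauchySeq_of_le_geometric (1 / 2) 1 (by norm_num) fun n => ?_
    rw [one_mul]
    exact hKd b n _ (hwK (n + 1) b) _ (hKsub b (n + 1) (hwK (n + 1 + 1) b))
  choose z hz using hlim
  have hzcl : ∀ b n, z b ∈ closure (K b n) := by
    intro b n
    refine mem_closure_of_tendsto (hz b) ?_
    filter_upwards [eventually_ge_atTop n] with m hm
    exact hKanti b (by omega : n ≤ m + 1) (hwK (m + 1) b)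
  have haz : ∀ b b', a (z b) = a (z b') := by
    intro b b'
    have h1 := (ha.tendsto (z b)).comp (hz b)
    have h2 := (ha.tendsto (z b')).comp (hz b')
    refine tendsto_nhds_unique h1 (h2.congr fun n => ?_)
    simp [hwx]
  have hinj : Injective z := by
    intro b b' he
    by_contra hne
    have hex : ∃ n, b n ≠ b' n := by
      by_contra h
      push Not at h
      exact hne (funext h)
    classical
    let n := Nat.find hex
    have hn : b n ≠ b' n := Nat.find_spec hex
    have hlt : ∀ m < n, b m = b' m := fun m hm => by
      have := Nat.find_min hex hm
      simpa using this
    have hK : ∀ m ≤ n, K b m = K b' m := by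
      intro m hm
      induction m with
      | zero => rfl
      | succ m ih => rw [hKs, hKs, ih (by omega), hlt m (by omega)]
    have hd := hf2 n (U n) _ (hKU b n)
    have h1 := hzcl b (n + 1)
    have h2 := hzcl b' (n + 1)
    rw [hKs] at h1 h2
    rw [← hK n le_rfl, ← he] at h2
    cases hb : b n <;> cases hb' : b' n
    · exact hn (hb.trans hb'.symm)
    · rw [hb] at h1; rw [hb'] at h2
      exact Set.disjoint_left.1 hd h1 h2
    · rw [hb] at h1; rw [hb'] at h2
      exact Set.disjoint_left.1 hd h2 h1
    · exact hn (hb.trans hb'.symm)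
  have hc : (range z).Countable := by
    refine (hcount (a (z fun _ => false))).mono ?_
    rintro _ ⟨b, rfl⟩
    exact haz _ _
  have hcb : Countable (ℕ → Bool) := by
    have := hc.to_subtype
    exact (rangeFactorization_injective.2 hinj).countable
  obtain ⟨e, he⟩ := exists_injective_nat (ℕ → Bool)
  have : Injective fun s : Set ℕ => e (fun n => by classical exact decide (n ∈ s)) := by
    intro s t h
    have := he h
    ext n
    simpa using congrFun this n
  exact Function.cantor_injective _ this

end LusinNovikovMetric

section LNStandard

open Set Topology

/-- Lusin–Novikov: a countable-to-one Borel map is injective on the pieces of a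
countable Borel cover. -/
lemma LN_standard {Z X : Type*} [MeasurableSpace Z] [StandardBorelSpace Z]
    [MeasurableSpace X] [StandardBorelSpace X] {a : Z → X} (ha : Measurable a)
    (hcount : ∀ x, (a ⁻¹' {x}).Countable) : LNSmall a (univ : Set Z) := by
  let := upgradeStandardBorel Z
  let := upgradeStandardBorel X
  have hbe := eq_borel_upgradeStandardBorel Z
  have hpol : PolishSpace Z := inferInstance
  obtain ⟨t', hle, hc, hp⟩ := ha.exists_continuous
  have hb : @BorelSpace Z t' _ :=
    @BorelSpace.mk Z t' _ (hbe.trans (borel_eq_borel_of_le hp hpol hle).symm)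
  have key : ∀ (t : TopologicalSpace Z) (_ : PolishSpace Z) (_ : BorelSpace Z)
      (_ : Continuous a), LNSmall a (univ : Set Z) := by
    clear hb hp hc hle t'
    intro t _ _ hc
    let := TopologicalSpace.upgradeIsCompletelyMetrizable Z
    exact LN_metric hc hcount
  exact @key t' hp hb hc

end LNStandard

/-! ### Borel selectors for a CBER -/

section Selector

open Set

lemma cber_selector {X : Type*} [MeasurableSpace X] [StandardBorelSpace X]
    (E : X → X → Prop) (hE : IsCBER E) (B : Set X) (hB : MeasurableSet B) :
    ∃ (S : Set X) (f : X → X), MeasurableSet S ∧ Measurable f ∧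
      (∀ x, x ∈ S ↔ ∃ y ∈ B, E x y) ∧ ∀ x ∈ S, f x ∈ B ∧ E x (f x) := by
  classical
  obtain ⟨-, hEm, hEc⟩ := hE
  have : StandardBorelSpace {p : X × X | E p.1 p.2} := hEm.standardBorel
  have ha : Measurable fun p : {p : X × X | E p.1 p.2} => p.1.1 :=
    measurable_fst.comp measurable_subtype_coe
  obtain ⟨C, hC, hCu⟩ := LN_standard ha (by
    intro x
    have himg : (Subtype.val '' ((fun p : {p : X × X | E p.1 p.2} => p.1.1) ⁻¹' {x})).Countable := by
      refine ((hEc x).image (fun y => (x, y))).mono ?_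
      rintro _ ⟨⟨⟨x', y⟩, hp⟩, h, rfl⟩
      obtain rfl : x' = x := h
      exact ⟨y, hp, rfl⟩
    exact countable_of_injective_of_countable_image Subtype.val_injective.injOn himg)
  let D : ℕ → Set (X × X) := fun k => (Subtype.val '' (C k)) ∩ Prod.snd ⁻¹' B
  have hD : ∀ k, MeasurableSet (D k) := fun k =>
    (hEm.subtype_image (hC k).1).inter (measurable_snd hB)
  have hDi : ∀ k, InjOn Prod.fst (D k) := by
    rintro k _ ⟨⟨p, hp, rfl⟩, -⟩ _ ⟨⟨q, hq, rfl⟩, -⟩ h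
    rw [(hC k).2 hp hq h]
  have hDE : ∀ k p, p ∈ D k → p.2 ∈ B ∧ E p.1 p.2 := by
    rintro k _ ⟨⟨p, hp, rfl⟩, h⟩
    exact ⟨h, p.2⟩
  have hED : ∀ x y, E x y → y ∈ B → ∃ k, (x, y) ∈ D k := by
    intro x y h hy
    have : (⟨(x, y), h⟩ : {p : X × X | E p.1 p.2}) ∈ ⋃ k, C k := hCu ▸ mem_univ _
    obtain ⟨k, hk⟩ := mem_iUnion.1 this
    exact ⟨k, ⟨_, hk, rfl⟩, hy⟩
  have him : ∀ k M, MeasurableSet M → MeasurableSet (Prod.fst '' (D k ∩ Prod.snd ⁻¹' M)) :=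
    fun k M hM => ((hD k).inter (measurable_snd hM)).image_of_measurable_injOn measurable_fst
      ((hDi k).mono inter_subset_left)
  let T : ℕ → Set X := fun k => Prod.fst '' (D k)
  have hT : ∀ k, MeasurableSet (T k) := fun k =>
    (hD k).image_of_measurable_injOn measurable_fst (hDi k)
  have hex : ∀ k x, ∃ y, (x ∈ T k → (x, y) ∈ D k) ∧ (x ∉ T k → y = x) := by
    intro k x
    by_cases h : x ∈ T k
    · obtain ⟨⟨x', y⟩, hp, rfl⟩ := h
      exact ⟨y, fun _ => hp, fun h' => absurd ⟨_, hp, rfl⟩ h'⟩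
    · exact ⟨x, fun h' => absurd h' h, fun _ => rfl⟩
  choose g hg1 hg2 using hex
  have hgm : ∀ k, Measurable (g k) := by
    intro k M hM
    have : g k ⁻¹' M = Prod.fst '' (D k ∩ Prod.snd ⁻¹' M) ∪ ((T k)ᶜ ∩ M) := by
      ext x
      constructor
      · intro hx
        by_cases h : x ∈ T k
        · exact Or.inl ⟨(x, g k x), ⟨hg1 k x h, hx⟩, rfl⟩
        · refine Or.inr ⟨h, ?_⟩
          rw [mem_preimage, hg2 k x h] at hx
          exact hx
      · rintro (⟨⟨x', y⟩, ⟨h1, h2⟩, rfl⟩ | ⟨h1, h2⟩)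
        · have h3 := hg1 k x' ⟨_, h1, rfl⟩
          have h4 := congrArg Prod.snd (hDi k h3 h1 rfl)
          change g k x' ∈ M
          change g k x' = y at h4
          rw [h4]
          exact h2
        · rw [mem_preimage, hg2 k x h1]
          exact h2
    rw [this]
    exact (him k M hM).union ((hT k).compl.inter hM)
  let S : Set X := ⋃ k, T k
  have hS : MeasurableSet S := MeasurableSet.iUnion hT
  have hfind : ∀ x, ∃ k, x ∈ T k ∨ x ∉ S := by
    intro x
    by_cases h : x ∈ S
    · obtain ⟨k, hk⟩ := mem_iUnion.1 h
      exact ⟨k, Or.inl hk⟩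
    · exact ⟨0, Or.inr h⟩
  refine ⟨S, fun x => g (Nat.find (hfind x)) x, hS,
    Measurable.find (p := fun k x => x ∈ T k ∨ x ∉ S) hgm (fun k => (hT k).union hS.compl) hfind, fun x => ?_, fun x hx => ?_⟩
  · constructor
    · intro h
      obtain ⟨k, ⟨x', y⟩, hp, rfl⟩ := mem_iUnion.1 h
      exact ⟨y, hDE k _ hp⟩
    · rintro ⟨y, hy, h⟩
      obtain ⟨k, hk⟩ := hED x y h hy
      exact mem_iUnion.2 ⟨k, _, hk, rfl⟩
  · have h := (Nat.find_spec (hfind x)).resolve_right (fun h => h hx)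
    exact hDE _ _ (hg1 _ _ h)

end Selector

/-! ### STATEMENT 8 -/

theorem borel_amenable_of_countable_cover {X : Type*} [MeasurableSpace X]
    [StandardBorelSpace X] (E : X → X → Prop) (hE : IsCBER E)
    (A : ℕ → Set X) (hmeas : ∀ n, MeasurableSet (A n)) (hcover : (⋃ n, A n) = Set.univ)
    (ham : ∀ n, BorelAmenable fun a b : A n => E a b) :
    BorelAmenable E := by
  classical
  obtain ⟨hEq, -, -⟩ := id hE
  choose S f hS hf hSiff hfS using fun n => cber_selector E hE (A n) (hmeas n)
  choose p hp hpm hpl using ham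
  let P : ℕ → ℕ → X → X → ℝ := fun n i u =>
    if h : u ∈ A n then extend Subtype.val (p n i ⟨u, h⟩) 0 else 0
  have hPin : ∀ n i u (h : u ∈ A n), P n i u = extend Subtype.val (p n i ⟨u, h⟩) 0 := by
    intro n i u h
    simp [P, h]
  have hPm : ∀ n i, Measurable fun q : X × X => P n i q.1 q.2 := by
    intro n i
    let e : A n × A n → X × X := Prod.map Subtype.val Subtype.val
    have he : MeasurableEmbedding e :=
      (MeasurableEmbedding.subtype_coe (hmeas n)).prodMap
        (MeasurableEmbedding.subtype_coe (hmeas n))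
    have h1 := he.measurable_extend (hpm n i) (measurable_const (a := (0 : ℝ)))
    convert h1 using 1
    ext ⟨u, v⟩
    by_cases hu : u ∈ A n
    · by_cases hv : v ∈ A n
      · have h2 : (u, v) = e (⟨u, hu⟩, ⟨v, hv⟩) := rfl
        have h3 : v = Subtype.val (⟨v, hv⟩ : A n) := rfl
        rw [h2, he.injective.extend_apply]
        change P n i u v = _
        rw [hPin n i u hu]
        exact Subtype.val_injective.extend_apply _ _ (⟨v, hv⟩ : A n)
      · rw [extend_apply' _ _ _ (by
          rintro ⟨⟨c, d⟩, hcd⟩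
          obtain rfl : d.1 = v := congrArg Prod.snd hcd
          exact hv d.2)]
        change P n i u v = _
        rw [hPin n i u hu]
        rw [extend_apply' _ _ _ (by
          rintro ⟨d, rfl⟩
          exact hv d.2)]
        rfl
    · rw [extend_apply' _ _ _ (by
          rintro ⟨⟨c, d⟩, hcd⟩
          obtain rfl : c.1 = u := congrArg Prod.fst hcd
          exact hu c.2)]
      simp [P, hu]
  have hfind : ∀ x, ∃ n, x ∈ S n := by
    intro x
    have : x ∈ ⋃ n, A n := hcover ▸ Set.mem_univ x
    obtain ⟨n, hn⟩ := Set.mem_iUnion.1 this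
    exact ⟨n, (hSiff n x).2 ⟨x, hn, hEq.refl x⟩⟩
  let N : X → ℕ := fun x => Nat.find (hfind x)
  have hN : ∀ x, x ∈ S (N x) := fun x => Nat.find_spec (hfind x)
  have hNinv : ∀ x y, E x y → N x = N y := by
    intro x y h
    have hiff : ∀ n, x ∈ S n ↔ y ∈ S n := by
      intro n
      rw [hSiff, hSiff]
      exact exists_congr fun z => and_congr_right fun _ =>
        ⟨fun hz => hEq.trans (hEq.symm h) hz, fun hz => hEq.trans h hz⟩
    exact Nat.find_congr' (hiff _)
  refine ⟨fun i x => P (N x) i (f (N x) x), fun i x => ?_, fun i => ?_, fun x y hxy ε hε => ?_⟩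
  · obtain ⟨hA, hxf⟩ := hfS _ x (hN x)
    obtain ⟨h1, h2, h3⟩ := hp (N x) i ⟨_, hA⟩
    simp only [hPin _ _ _ hA]
    refine ⟨fun y => ?_, fun y hy => ?_, (hasSum_extend_zero Subtype.val_injective).2 h3⟩
    · by_cases hy : y ∈ A (N x)
      · rw [show y = Subtype.val (⟨y, hy⟩ : A (N x)) from rfl,
          Subtype.val_injective.extend_apply]
        exact h1 _
      · rw [extend_apply' _ _ _ (by
          rintro ⟨d, rfl⟩
          exact hy d.2)]
        exact le_rfl
    · by_cases hyA : y ∈ A (N x)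
      · rw [show y = Subtype.val (⟨y, hyA⟩ : A (N x)) from rfl,
          Subtype.val_injective.extend_apply] at hy
        exact hEq.trans hxf (h2 _ hy)
      · rw [extend_apply' _ _ _ (by
          rintro ⟨d, rfl⟩
          exact hyA d.2)] at hy
        exact absurd rfl hy
  · have h := Measurable.find (f := fun n (q : X × X) => P n i (f n q.1) q.2)
      (p := fun n (q : X × X) => q.1 ∈ S n)
      (fun n => (hPm n i).comp (((hf n).comp measurable_fst).prodMk measurable_snd))
      (fun n => measurable_fst (hS n)) (fun q => hfind q.1)
    exact h
  · have hn := hNinv x y hxy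
    obtain ⟨hAx, hxf⟩ := hfS _ x (hN x)
    obtain ⟨hAy, hyf⟩ := hfS _ y (hN y)
    rw [← hn] at hAy hyf
    have hE' : E (f (N x) x) (f (N x) y) := hEq.trans (hEq.symm hxf) (hEq.trans hxy hyf)
    filter_upwards [hpl (N x) ⟨_, hAx⟩ ⟨_, hAy⟩ hE' ε hε] with i hi
    rw [← hn, hPin _ _ _ hAx, hPin _ _ _ hAy]
    convert hi using 1
    unfold l1dist
    rw [← tsum_extend_zero (Subtype.val_injective (p := fun z => z ∈ A (N x)))]
    refine tsum_congr fun z => ?_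
    by_cases hz : z ∈ A (N x)
    · have hval : ∀ g : {z // z ∈ A (N x)} → ℝ, extend Subtype.val g 0 z = g ⟨z, hz⟩ := fun g =>
        Subtype.val_injective.extend_apply g 0 ⟨z, hz⟩
      exact (congrArg₂ (fun s t : ℝ => |s - t|) (hval _) (hval _)).trans (hval
        fun a => |p (N x) i ⟨f (N x) x, hAx⟩ a - p (N x) i ⟨f (N x) y, hAy⟩ a|).symm
    · have hnot : ¬ ∃ d : {z // z ∈ A (N x)}, d.1 = z := by
        rintro ⟨d, rfl⟩
        exact hz d.2
      rw [extend_apply' _ _ _ hnot, extend_apply' _ _ _ hnot, extend_apply' _ _ _ hnot]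
      simp
end
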